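/- Let τ > 0, ξ ∈ ℝ with |ξ| < 1, and let N : [0,τ] → ℝ be continuous, and define Δ(s) = 1 − ξ e^{−sτ} − ∫₀^τ N(ν) e^{−sν} dν, M(ω) = Re(Δ(iω)) and S(ω) = Im(Δ(iω)). Assume that Δ has no roots on the imaginary axis, and let ρ₁ ≥ … ≥ ρ_m > 0 be the positive zeros of M repeated according to multiplicity, with Γ = Σ_{j=1}^m (−1)^{j−1} sign(S(ρ_j)). Then the integral difference equation z(t) = ξ z(t−τ) + ∫₀^τ N(ν) z(t−ν) dν is exponentially stable in the L² norm if and only if ∫₀^τ N(ν) dν < 1 − ξ and Γ = 0. -/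

import Mathlib

/-!
The equivalence passes through the location of the zeros of the characteristic function `Δ`.

**Stability is equivalent to the absence of zeros in `Re s ≥ 0`.** A zero `s` with `Re s ≥ 0` gives
the non-decaying solution `Re e^{st}` (`not_stable_of_zero`). Conversely, if there is no such zero,
then `|Δ| ≥ κ > 0` on the closed half plane, since `|ξ| < 1` and the Laplace integral of `N` tends to
`0` at infinity (`charFn_lower_bound`). On each line `Re s = σ ≥ 0`, `Δ` is the Fourier symbol of the
equation for `e^{-σt} z`, so Plancherel's theorem gives an `L²` bound; an exponential weight can then
be improved by a fixed `ε` (`step_lemma`). Starting from a crude growth bound (`energy_start`) and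
iterating, one reaches the weight `e^{εt}` (`energy_decay`), whence exponential stability
(`stable_of_no_zeros`).

**The number of zeros in `Re s > 0` is `Γ`.** By factoring out the finitely many zeros, the variation
of `arg Δ` around a large half disc is `2π` times the number `n` of zeros (`exists_hasWinding`). Along
the large semicircle `Re Δ > 0`, so the argument stays in a band of width `π` there. Along the upper
half of the imaginary axis, the argument is tracked from `iR` down to `0` by counting how it crosses
the zeros of `M = Re Δ`: its value at `0` is `πΓ` relative to the band at `iR` (`crossing`). By the
symmetry `Δ(conj s) = conj Δ(s)` it is `-πΓ` relative to the band at `-iR`; the two bands differ by `2πn`,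
so `n = Γ` (`exists_zero_count`).

Hence stability is equivalent to `Γ = 0`, and in that case `Δ(0) = 1 - ξ - ∫ N > 0` by the
intermediate value theorem on `[0, ∞)` (`integral_lt_of_no_zeros`).
-/

open MeasureTheory Complex Real

/-- The order (multiplicity) of `x` as a zero of the (analytic) function `f`: the
smallest `k` such that the `k`-th derivative of `f` at `x` does not vanish. -/
noncomputable def zeroOrder {𝕜 : Type*} [NontriviallyNormedField 𝕜] (f : 𝕜 → 𝕜) (x : 𝕜) : ℕ :=
  sInf {k : ℕ | iteratedDeriv k f x ≠ 0}

/-- `z : ℝ → ℝ` (whose values matter on `[-τ, ∞)`) is a solution of the integral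
difference equation `z(t) = ξ z(t-τ) + ∫₀^τ N(ν) z(t-ν) dν` with initial condition
of class `H¹([-τ,0])` satisfying the compatibility condition. -/
def IsSolutionIDE (τ ξ : ℝ) (N : ℝ → ℝ) (z : ℝ → ℝ) : Prop :=
  (∀ T : ℝ, IntervalIntegrable (fun t => (z t) ^ 2) MeasureTheory.volume (-τ) T) ∧
  (∃ g : ℝ → ℝ, IntervalIntegrable (fun t => (g t) ^ 2) MeasureTheory.volume (-τ) 0 ∧
    ∀ θ ∈ Set.Icc (-τ) (0:ℝ), z θ = z (-τ) + ∫ s in (-τ)..θ, g s) ∧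
  (z 0 = ξ * z (-τ) + ∫ ν in (0:ℝ)..τ, N ν * z (-ν)) ∧
  (∀ t : ℝ, 0 ≤ t → z t = ξ * z (t - τ) + ∫ ν in (0:ℝ)..τ, N ν * z (t - ν))

/-- Exponential stability in the `L²` norm of the integral difference equation. -/
def ExpStableIDE (τ ξ : ℝ) (N : ℝ → ℝ) : Prop :=
  ∃ C : ℝ, 0 ≤ C ∧ ∃ η : ℝ, 0 < η ∧ ∀ z : ℝ → ℝ, IsSolutionIDE τ ξ N z →
    ∀ t : ℝ, 0 ≤ t →
      Real.sqrt (∫ θ in (-τ)..0, (z (t + θ)) ^ 2) ≤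
        C * Real.exp (-η * t) * Real.sqrt (∫ θ in (-τ)..0, (z θ) ^ 2)

/-! ### Plancherel estimates for delay operators -/

section

open scoped FourierTransform Convolution ENNReal

/-- The Plancherel extension of the Fourier transform to `L²` is given by the Fourier integral on
`L¹ ∩ L²`. -/
theorem fourier_toLp_ae_eq {u : ℝ → ℂ} (h1 : Integrable u) (h2 : MemLp u 2) :
    ((𝓕 (h2.toLp u) : Lp ℂ 2 (volume : Measure ℝ)) : ℝ → ℂ) =ᵐ[volume] 𝓕 u := by
  have hcont : Continuous (𝓕 u) :=
    VectorFourier.fourierIntegral_continuous Real.continuous_fourierChar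
      (by exact continuous_inner) h1
  apply ae_eq_of_integral_contDiff_smul_eq
  · exact (Lp.memLp _).locallyIntegrable (by norm_num)
  · exact hcont.locallyIntegrable
  intro φ hφ hφc
  let g : SchwartzMap ℝ ℂ := HasCompactSupport.toSchwartzMap (f := fun x => (φ x : ℂ))
    (hφc.comp_left (g := Complex.ofReal) (by simp)) (by exact Complex.ofRealCLM.contDiff.comp hφ)
  have hg : ∀ x, g x = (φ x : ℂ) := fun x => rfl
  have e1 := congrArg (fun T => T g) (Lp.fourier_toTemperedDistribution_eq (h2.toLp u))
  simp only [TemperedDistribution.fourier_apply, Lp.toTemperedDistribution_apply] at e1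
  have e2 : ∫ x, φ x • ((𝓕 (h2.toLp u) : Lp ℂ 2 (volume : Measure ℝ)) : ℝ → ℂ) x
      = ∫ x, g x • ((𝓕 (h2.toLp u) : Lp ℂ 2 (volume : Measure ℝ)) : ℝ → ℂ) x := by
    congr 1
  rw [e2, ← e1]
  have e3 : ∫ x, (𝓕 g) x • ((h2.toLp u : Lp ℂ 2 (volume : Measure ℝ)) : ℝ → ℂ) x
      = ∫ x, (𝓕 (g : ℝ → ℂ)) x • u x := by
    apply integral_congr_ae
    filter_upwards [h2.coeFn_toLp] with x hx
    rw [hx, SchwartzMap.fourier_coe]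
  rw [e3]
  have := VectorFourier.integral_fourierIntegral_smul_eq_flip (L := innerₗ ℝ) (μ := volume)
    (ν := volume) (f := (g : ℝ → ℂ)) (g := u) Real.continuous_fourierChar
      (by exact continuous_inner) g.integrable h1
  rw [flip_innerₗ] at this
  exact this

theorem eLpNorm_fourier_eq {u : ℝ → ℂ} (h1 : Integrable u) (h2 : MemLp u 2) :
    eLpNorm (𝓕 u) 2 volume = eLpNorm u 2 volume := by
  rw [← eLpNorm_congr_ae (fourier_toLp_ae_eq h1 h2)]
  have := Lp.norm_fourier_eq (h2.toLp u)
  rw [Lp.norm_def, Lp.norm_def, ENNReal.toReal_eq_toReal_iff' (Lp.eLpNorm_ne_top _)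
    (Lp.eLpNorm_ne_top _)] at this
  rw [this]
  exact eLpNorm_congr_ae h2.coeFn_toLp

/-- If the Fourier symbol of `u ↦ u - c u(· - τ) - n * u` is bounded below by `κ`, then so is this
operator on `L¹ ∩ L²`, by Plancherel. -/
theorem mul_eLpNorm_le_of_symbol {u n : ℝ → ℂ} (h1 : Integrable u) (h2 : MemLp u 2)
    (hn : Integrable n) (c : ℂ) (τ κ : ℝ)
    (hκ : ∀ x : ℝ, κ ≤ ‖1 - c * Complex.exp (-(2 * π * x * τ * I)) - 𝓕 n x‖) (v : ℝ → ℂ)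
    (hv : ∀ t, v t = u t - c * u (t - τ) - ∫ ν, n ν * u (t - ν)) :
    ENNReal.ofReal κ * eLpNorm u 2 volume ≤ eLpNorm v 2 volume := by
  have hsh : Integrable (fun t => c * u (t - τ)) := (h1.comp_sub_right τ).const_mul c
  have hconv : Integrable (fun t => ∫ ν, n ν * u (t - ν)) :=
    hn.integrable_convolution (ContinuousLinearMap.mul ℂ ℂ) h1
  have hv' : v = fun t => u t - c * u (t - τ) - ∫ ν, n ν * u (t - ν) := funext hv
  have hvint : Integrable v := by rw [hv']; exact (h1.sub hsh).sub hconv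
  by_cases htop : eLpNorm v 2 volume = ⊤
  · rw [htop]; exact le_top
  have hv2 : MemLp v 2 := ⟨hvint.1, lt_top_iff_ne_top.2 htop⟩
  rw [← eLpNorm_fourier_eq h1 h2, ← eLpNorm_fourier_eq hvint hv2]
  have hF : ∀ x, 𝓕 v x = (1 - c * Complex.exp (-(2 * π * x * τ * I)) - 𝓕 n x) * 𝓕 u x := by
    intro x
    have hc : 𝓕 (fun t => ∫ ν, n ν * u (t - ν)) x = 𝓕 n x * 𝓕 u x :=
      Real.fourier_mul_convolution_eq hn h1 x
    have hs : 𝓕 (fun t => u (t - τ)) x = Complex.exp (-(2 * π * x * τ * I)) * 𝓕 u x := by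
      rw [Real.fourier_real_eq_integral_exp_smul, Real.fourier_real_eq_integral_exp_smul,
        ← integral_const_mul, ← integral_add_right_eq_self _ τ]
      congr 1; ext t
      simp only [smul_eq_mul]
      rw [← mul_assoc, ← Complex.exp_add, add_sub_cancel_right]
      congr 2
      push_cast; ring
    have key : 𝓕 v x = 𝓕 u x - c * 𝓕 (fun t => u (t - τ)) x
        - 𝓕 (fun t => ∫ ν, n ν * u (t - ν)) x := by
      simp only [Real.fourier_real_eq]
      rw [← integral_const_mul, ← integral_sub, ← integral_sub]
      · congr 1; ext t; rw [hv]; simp only [Circle.smul_def, smul_eq_mul]; ring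
      · refine Integrable.sub ?_ ?_
        · simpa [mul_comm] using (Real.fourierIntegral_convergent_iff x).2 h1
        · refine Integrable.const_mul ?_ c
          simpa [mul_comm] using (Real.fourierIntegral_convergent_iff x).2 (h1.comp_sub_right τ)
      · simpa [mul_comm] using (Real.fourierIntegral_convergent_iff x).2 hconv
      · simpa [mul_comm] using (Real.fourierIntegral_convergent_iff x).2 h1
      · refine Integrable.const_mul ?_ c
        simpa [mul_comm] using (Real.fourierIntegral_convergent_iff x).2 (h1.comp_sub_right τ)
    rw [key, hc, hs]; ring
  by_cases hκ0 : κ ≤ 0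
  · simp [ENNReal.ofReal_of_nonpos hκ0]
  push Not at hκ0
  have : ENNReal.ofReal κ * eLpNorm (𝓕 u) 2 volume = eLpNorm ((κ : ℂ) • 𝓕 u) 2 volume := by
    rw [eLpNorm_const_smul]
    congr 1
    rw [← ofReal_norm]; simp [abs_of_pos hκ0]
  rw [this]
  apply eLpNorm_mono
  intro x
  rw [hF, Pi.smul_apply, norm_smul, norm_mul]
  gcongr
  simpa [abs_of_pos hκ0] using hκ x

theorem lintegral_conv_sq_le {τ : ℝ} {k U : ℝ → ℝ≥0∞} (hk : Measurable k)
    (hU : Measurable U) :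
    ∫⁻ t, (∫⁻ ν in Set.Ioc 0 τ, k ν * U (t - ν)) ^ 2 ≤
      (∫⁻ ν in Set.Ioc 0 τ, k ν ^ 2) * ENNReal.ofReal τ * ∫⁻ t, U t ^ 2 := by
  have hpt : ∀ t, (∫⁻ ν in Set.Ioc 0 τ, k ν * U (t - ν)) ^ 2 ≤
      (∫⁻ ν in Set.Ioc 0 τ, k ν ^ 2) * ∫⁻ ν in Set.Ioc 0 τ, U (t - ν) ^ 2 := by
    intro t
    have hU' : Measurable (fun ν => U (t - ν)) := by fun_prop
    have := ENNReal.lintegral_mul_le_Lp_mul_Lq (volume.restrict (Set.Ioc 0 τ))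
      (p := 2) (q := 2) ⟨by norm_num, by norm_num, by norm_num⟩ hk.aemeasurable hU'.aemeasurable
    have h2 := pow_le_pow_left' this 2
    refine h2.trans (le_of_eq ?_)
    rw [mul_pow, ← ENNReal.rpow_natCast, ← ENNReal.rpow_mul, ← ENNReal.rpow_natCast,
      ← ENNReal.rpow_mul]
    simp
  calc _ ≤ ∫⁻ t, (∫⁻ ν in Set.Ioc 0 τ, k ν ^ 2) * ∫⁻ ν in Set.Ioc 0 τ, U (t - ν) ^ 2 :=
        lintegral_mono hpt
    _ = (∫⁻ ν in Set.Ioc 0 τ, k ν ^ 2) * ∫⁻ t, ∫⁻ ν in Set.Ioc 0 τ, U (t - ν) ^ 2 := by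
        refine lintegral_const_mul _ ?_
        exact Measurable.lintegral_prod_right' (f := fun p : ℝ × ℝ => U (p.1 - p.2) ^ 2)
          (by fun_prop)
    _ = (∫⁻ ν in Set.Ioc 0 τ, k ν ^ 2) * ∫⁻ ν in Set.Ioc 0 τ, ∫⁻ t, U (t - ν) ^ 2 := by
        rw [lintegral_lintegral_swap]
        exact (by fun_prop : Measurable (fun p : ℝ × ℝ => U (p.1 - p.2) ^ 2)).aemeasurable
    _ = _ := by
        have : ∀ ν : ℝ, ∫⁻ t, U (t - ν) ^ 2 = ∫⁻ t, U t ^ 2 := fun ν =>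
          lintegral_sub_right_eq_self (fun t => U t ^ 2) ν
        simp only [this, lintegral_const, Measure.restrict_apply_univ, Real.volume_Ioc, sub_zero]
        ring

theorem eLpNorm_two_sq {E : Type*} [NormedAddCommGroup E] (F : ℝ → E) :
    eLpNorm F 2 volume ^ 2 = ∫⁻ t, ‖F t‖ₑ ^ 2 := by
  rw [eLpNorm_eq_lintegral_rpow_enorm_toReal (by norm_num) (by norm_num), ← ENNReal.rpow_natCast,
    ← ENNReal.rpow_mul]
  simp

/-- A Young-type inequality on `L²` for kernels supported in `(0, τ]`. -/
theorem eLpNorm_le_of_conv {τ : ℝ} {k : ℝ → ℝ≥0∞} (hk : Measurable k)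
    {u F : ℝ → ℝ} (hu : Measurable u) {K : ℝ≥0∞}
    (hK : (∫⁻ ν in Set.Ioc 0 τ, k ν ^ 2) * ENNReal.ofReal τ ≤ K ^ 2)
    (hF : ∀ t, ‖F t‖ₑ ≤ ∫⁻ ν in Set.Ioc 0 τ, k ν * ‖u (t - ν)‖ₑ) :
    eLpNorm F 2 volume ≤ K * eLpNorm u 2 volume := by
  rw [← ENNReal.pow_le_pow_left_iff (n := 2) (by norm_num), mul_pow, eLpNorm_two_sq,
    eLpNorm_two_sq]
  calc _ ≤ ∫⁻ t, (∫⁻ ν in Set.Ioc 0 τ, k ν * ‖u (t - ν)‖ₑ) ^ 2 :=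
        lintegral_mono fun t => pow_le_pow_left' (hF t) 2
    _ ≤ _ := lintegral_conv_sq_le hk (U := fun t => ‖u t‖ₑ) hu.enorm
    _ ≤ _ := by gcongr

theorem eLpNorm_shift (u : ℝ → ℝ) (τ : ℝ) (hu : Measurable u) :
    eLpNorm (fun t => u (t - τ)) 2 volume = eLpNorm u 2 volume :=
  eLpNorm_comp_measurePreserving hu.aestronglyMeasurable (measurePreserving_sub_right volume τ)

theorem mul_eLpNorm_le_of_symbol_real {u n : ℝ → ℝ} (h1 : Integrable u) (h2 : MemLp u 2)
    (hn : Integrable n) (c : ℝ) (τ κ : ℝ)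
    (hκ : ∀ x : ℝ, κ ≤ ‖1 - (c : ℂ) * Complex.exp (-(2 * π * x * τ * I))
      - 𝓕 (fun ν => (n ν : ℂ)) x‖) (v : ℝ → ℝ)
    (hv : ∀ t, v t = u t - c * u (t - τ) - ∫ ν, n ν * u (t - ν)) :
    ENNReal.ofReal κ * eLpNorm u 2 volume ≤ eLpNorm v 2 volume := by
  have := mul_eLpNorm_le_of_symbol (u := fun t => (u t : ℂ)) (n := fun t => (n t : ℂ))
    h1.ofReal h2.ofReal hn.ofReal c τ κ hκ (fun t => (v t : ℂ)) (by
      intro t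
      simp only [hv, Complex.ofReal_sub, Complex.ofReal_mul, ← integral_complex_ofReal])
  have e : ∀ w : ℝ → ℝ, eLpNorm (fun t => (w t : ℂ)) 2 volume = eLpNorm w 2 volume :=
    fun w => eLpNorm_congr_norm_ae (Filter.Eventually.of_forall fun t => by simp)
  rwa [e, e] at this

end

/-! ### The characteristic function -/

section

open scoped FourierTransform

/-- The characteristic function `Δ(s) = 1 - ξ e^{-sτ} - ∫₀^τ N(ν) e^{-sν} dν` of the integral
difference equation. -/
noncomputable def charFn (τ ξ : ℝ) (N : ℝ → ℝ) (s : ℂ) : ℂ :=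
  1 - (ξ : ℂ) * Complex.exp (-s * τ) - ∫ ν in (0:ℝ)..τ, (N ν : ℂ) * Complex.exp (-s * ν)

theorem charFn_conj (τ ξ : ℝ) (N : ℝ → ℝ) (s : ℂ) :
    charFn τ ξ N (starRingEnd ℂ s) = starRingEnd ℂ (charFn τ ξ N s) := by
  have h : ∀ (s : ℂ) (x : ℝ), Complex.exp (-(starRingEnd ℂ s) * x)
      = starRingEnd ℂ (Complex.exp (-s * x)) := by
    intro s x; rw [← Complex.exp_conj]; simp
  unfold charFn
  rw [map_sub, map_sub, map_mul, ← h, intervalIntegral.intervalIntegral_eq_integral_uIoc,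
    intervalIntegral.intervalIntegral_eq_integral_uIoc]
  simp only [h, real_smul, map_mul, ← integral_conj, Complex.conj_ofReal, map_one]

theorem charFn_differentiable {τ ξ : ℝ} (hτ : 0 < τ) {N : ℝ → ℝ}
    (hN : ContinuousOn N (Set.Icc 0 τ)) : Differentiable ℂ (charFn τ ξ N) := by
  have hN' : ContinuousOn N (Set.uIcc 0 τ) := by rwa [Set.uIcc_of_le hτ.le]
  have hI : Differentiable ℂ (fun s : ℂ => ∫ ν in (0:ℝ)..τ, (N ν : ℂ) * Complex.exp (-s * ν)) := by
    intro s
    have hc : ∀ s : ℂ, ContinuousOn (fun ν : ℝ => (N ν : ℂ) * Complex.exp (-s * ν))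
        (Set.uIcc 0 τ) := fun s => (Complex.continuous_ofReal.comp_continuousOn hN').mul
          (by fun_prop)
    have hc' : ∀ s : ℂ, ContinuousOn (fun ν : ℝ => (N ν : ℂ) * (Complex.exp (-s * ν) * (-ν)))
        (Set.uIcc 0 τ) := fun s => (Complex.continuous_ofReal.comp_continuousOn hN').mul
          (by fun_prop)
    have := intervalIntegral.hasDerivAt_integral_of_dominated_loc_of_deriv_le (𝕜 := ℂ)
      (μ := volume) (a := 0) (b := τ)
      (F := fun (s : ℂ) (ν : ℝ) => (N ν : ℂ) * Complex.exp (-s * ν))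
      (F' := fun (s : ℂ) (ν : ℝ) => (N ν : ℂ) * (Complex.exp (-s * ν) * (-ν))) (x₀ := s)
      (s := Metric.ball s 1) (bound := fun ν => |N ν| * (Real.exp ((‖s‖ + 1) * τ) * τ))
      (Metric.ball_mem_nhds s one_pos) ?_ ?_ ?_ ?_ ?_ ?_
    · exact this.2.differentiableAt
    · refine Filter.Eventually.of_forall fun x => ?_
      exact ((hc x).mono Set.uIoc_subset_uIcc).aestronglyMeasurable measurableSet_uIoc
    · exact (hc s).intervalIntegrable
    · exact ((hc' s).mono Set.uIoc_subset_uIcc).aestronglyMeasurable measurableSet_uIoc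
    · refine Filter.Eventually.of_forall fun ν hν x hx => ?_
      rw [Set.uIoc_of_le hτ.le] at hν
      rw [norm_mul, norm_mul, Complex.norm_real, Complex.norm_exp, Real.norm_eq_abs]
      have h1 : ‖-(ν : ℂ)‖ ≤ τ := by
        rw [norm_neg, Complex.norm_real, Real.norm_eq_abs, abs_of_pos hν.1]; exact hν.2
      have h2 : (-x * ν).re ≤ (‖s‖ + 1) * τ := by
        have h3 : ‖x‖ ≤ ‖s‖ + 1 := by
          have := Metric.mem_ball.1 hx
          rw [dist_eq_norm] at this
          have := norm_le_norm_add_norm_sub' x s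
          linarith
        calc (-x * ν).re ≤ ‖-x * (ν : ℂ)‖ := Complex.re_le_norm _
          _ = ‖x‖ * ν := by rw [norm_mul, norm_neg, Complex.norm_real, Real.norm_eq_abs,
                abs_of_pos hν.1]
          _ ≤ _ := mul_le_mul h3 hν.2 hν.1.le (by positivity)
      gcongr
    · exact (ContinuousOn.mul hN'.abs continuousOn_const).intervalIntegrable
    · refine Filter.Eventually.of_forall fun ν _ x _ => ?_
      have h0 : HasDerivAt (fun x : ℂ => -x * (ν : ℂ)) (-(ν : ℂ)) x := by
        simpa using (hasDerivAt_id x).neg.mul_const (ν : ℂ)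
      exact h0.cexp.const_mul _
  unfold charFn
  fun_prop

/-- A Riemann-Lebesgue lemma, uniform in the closed right half plane: approximate `N` by a
polynomial and integrate by parts. -/
theorem laplace_small {τ : ℝ} (hτ : 0 < τ) {N : ℝ → ℝ}
    (hN : ContinuousOn N (Set.Icc 0 τ)) {ε : ℝ} (hε : 0 < ε) :
    ∃ R : ℝ, 0 < R ∧ ∀ s : ℂ, 0 ≤ s.re → R ≤ ‖s‖ →
      ‖∫ ν in (0:ℝ)..τ, (N ν : ℂ) * Complex.exp (-s * ν)‖ ≤ ε := by
  obtain ⟨p, hp⟩ := exists_polynomial_near_of_continuousOn 0 τ N hN (ε / (2 * τ)) (by positivity)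
  have hN' : ContinuousOn N (Set.uIcc 0 τ) := by rwa [Set.uIcc_of_le hτ.le]
  obtain ⟨B, hB⟩ := isCompact_Icc.exists_bound_of_continuousOn
    (s := Set.Icc (0:ℝ) τ) (f := fun x => p.eval x) (by fun_prop)
  obtain ⟨B', hB'⟩ := isCompact_Icc.exists_bound_of_continuousOn
    (s := Set.Icc (0:ℝ) τ) (f := fun x => p.derivative.eval x) (by fun_prop)
  have hB0 : 0 ≤ B := (norm_nonneg _).trans (hB 0 ⟨le_rfl, hτ.le⟩)
  have hB'0 : 0 ≤ B' := (norm_nonneg _).trans (hB' 0 ⟨le_rfl, hτ.le⟩)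
  refine ⟨2 * (2 * B + B' * τ) / ε + 1, by positivity, fun s hs hR => ?_⟩
  have hs0 : 0 < ‖s‖ := lt_of_lt_of_le (by positivity) hR
  have hs0' : s ≠ 0 := norm_pos_iff.1 hs0
  have hexp : ∀ ν : ℝ, 0 ≤ ν → ‖Complex.exp (-s * ν)‖ ≤ 1 := by
    intro ν hν
    rw [Complex.norm_exp, Real.exp_le_one_iff]
    simp; positivity
  have hcN : ContinuousOn (fun ν : ℝ => (N ν : ℂ) * Complex.exp (-s * ν)) (Set.uIcc 0 τ) :=
    (Complex.continuous_ofReal.comp_continuousOn hN').mul (by fun_prop)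
  have hcP : Continuous (fun ν : ℝ => ((p.eval ν : ℝ) : ℂ) * Complex.exp (-s * ν)) := by
    fun_prop
  have hcP' : Continuous (fun ν : ℝ => ((p.derivative.eval ν : ℝ) : ℂ) * Complex.exp (-s * ν)) := by
    fun_prop
  -- integration by parts for the polynomial approximation
  have hpoly : ‖∫ ν in (0:ℝ)..τ, ((p.eval ν : ℝ) : ℂ) * Complex.exp (-s * ν)‖ ≤ ε / 2 := by
    have hd : ∀ ν : ℝ, HasDerivAt (fun ν : ℝ => ((p.eval ν : ℝ) : ℂ) * Complex.exp (-s * ν))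
        (((p.derivative.eval ν : ℝ) : ℂ) * Complex.exp (-s * ν)
          - s * (((p.eval ν : ℝ) : ℂ) * Complex.exp (-s * ν))) ν := by
      intro ν
      have h1 : HasDerivAt (fun ν : ℝ => ((p.eval ν : ℝ) : ℂ))
        (((p.derivative.eval ν : ℝ) : ℂ)) ν := (p.hasDerivAt ν).ofReal_comp
      have h2 : HasDerivAt (fun ν : ℝ => -s * (ν : ℂ)) (-s) ν := by
        simpa using (Complex.ofRealCLM.hasDerivAt (x := ν)).const_mul (-s)
      refine (h1.mul h2.cexp).congr_deriv ?_
      ring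
    have hint := intervalIntegral.integral_eq_sub_of_hasDerivAt (a := 0) (b := τ)
      (fun ν _ => hd ν) ((hcP'.sub (continuous_const.mul hcP)).intervalIntegrable _ _)
    have hcsP : Continuous (fun ν : ℝ => s * (((p.eval ν : ℝ) : ℂ) * Complex.exp (-s * ν))) :=
      continuous_const.mul hcP
    rw [intervalIntegral.integral_sub (hcP'.intervalIntegrable _ _)
      (hcsP.intervalIntegrable _ _),
      intervalIntegral.integral_const_mul] at hint
    set J := ∫ ν in (0:ℝ)..τ, ((p.eval ν : ℝ) : ℂ) * Complex.exp (-s * ν)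
    set J' := ∫ ν in (0:ℝ)..τ, ((p.derivative.eval ν : ℝ) : ℂ) * Complex.exp (-s * ν) with hJ'
    have hJ'b : ‖J'‖ ≤ B' * τ := by
      have := intervalIntegral.norm_integral_le_of_norm_le_const (a := 0) (b := τ) (C := B')
        (f := fun ν : ℝ => ((p.derivative.eval ν : ℝ) : ℂ) * Complex.exp (-s * ν)) ?_
      · rwa [sub_zero, abs_of_pos hτ] at this
      intro ν hν
      rw [Set.uIoc_of_le hτ.le] at hν
      rw [norm_mul, Complex.norm_real, ← mul_one B']
      exact mul_le_mul (hB' ν ⟨hν.1.le, hν.2⟩) (hexp ν hν.1.le) (norm_nonneg _) hB'0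
    have hb : ∀ ν ∈ Set.Icc (0:ℝ) τ, ‖((p.eval ν : ℝ) : ℂ) * Complex.exp (-s * ν)‖ ≤ B := by
      intro ν hν
      rw [norm_mul, Complex.norm_real, ← mul_one B]
      exact mul_le_mul (hB ν hν) (hexp ν hν.1) (norm_nonneg _) hB0
    have h1 := hb τ ⟨hτ.le, le_rfl⟩
    have h2 := hb 0 ⟨le_rfl, hτ.le⟩
    have hsJ : ‖s‖ * ‖J‖ ≤ 2 * B + B' * τ := by
      rw [← norm_mul]
      have : s * J = J' - (((p.eval τ : ℝ) : ℂ) * Complex.exp (-s * τ)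
        - ((p.eval 0 : ℝ) : ℂ) * Complex.exp (-s * (0:ℝ))) := by rw [← hint]; ring
      rw [this]
      calc _ ≤ ‖J'‖ + (‖((p.eval τ : ℝ) : ℂ) * Complex.exp (-s * τ)‖
            + ‖((p.eval 0 : ℝ) : ℂ) * Complex.exp (-s * (0:ℝ))‖) :=
            (norm_sub_le _ _).trans (add_le_add le_rfl (norm_sub_le _ _))
        _ ≤ _ := by linarith
    have hR' : 2 * (2 * B + B' * τ) ≤ ‖s‖ * ε := by
      have : 2 * (2 * B + B' * τ) / ε ≤ ‖s‖ := by linarith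
      rwa [div_le_iff₀ hε] at this
    have : ‖s‖ * ‖J‖ ≤ ‖s‖ * (ε / 2) := by linarith
    exact le_of_mul_le_mul_left this hs0
  have hdiff : ‖∫ ν in (0:ℝ)..τ, ((N ν : ℂ) * Complex.exp (-s * ν)
      - ((p.eval ν : ℝ) : ℂ) * Complex.exp (-s * ν))‖ ≤ ε / 2 := by
    have := intervalIntegral.norm_integral_le_of_norm_le_const (a := 0) (b := τ)
      (C := ε / (2 * τ)) (f := fun ν : ℝ => ((N ν : ℂ) * Complex.exp (-s * ν)
      - ((p.eval ν : ℝ) : ℂ) * Complex.exp (-s * ν))) ?_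
    · rw [sub_zero, abs_of_pos hτ] at this
      refine this.trans (le_of_eq ?_)
      field_simp
    intro ν hν
    rw [Set.uIoc_of_le hτ.le] at hν
    rw [← sub_mul, norm_mul, ← Complex.ofReal_sub, Complex.norm_real, ← mul_one (ε / (2 * τ)),
      Real.norm_eq_abs, abs_sub_comm]
    exact mul_le_mul (hp ν ⟨hν.1.le, hν.2⟩).le (hexp ν hν.1.le) (norm_nonneg _) (by positivity)
  rw [intervalIntegral.integral_sub hcN.intervalIntegrable (hcP.intervalIntegrable _ _)] at hdiff
  have := norm_add_le_of_le hdiff hpoly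
  simpa using this

/-- Far out in the closed right half plane the real part of the characteristic function is bounded
below, because `|ξ e^{-sτ}| ≤ |ξ| < 1` there. -/
theorem charFn_re_ge {τ ξ : ℝ} (hτ : 0 < τ) (hξ : |ξ| < 1) {N : ℝ → ℝ}
    (hN : ContinuousOn N (Set.Icc 0 τ)) :
    ∃ R : ℝ, 0 < R ∧ ∀ s : ℂ, 0 ≤ s.re → R ≤ ‖s‖ →
      (1 - |ξ|) / 2 ≤ (charFn τ ξ N s).re := by
  obtain ⟨R, hR, h⟩ := laplace_small hτ hN (ε := (1 - |ξ|) / 2) (by linarith)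
  refine ⟨R, hR, fun s hs hsR => ?_⟩
  have h1 := h s hs hsR
  have h2 : ‖(ξ : ℂ) * Complex.exp (-s * τ)‖ ≤ |ξ| := by
    rw [norm_mul, Complex.norm_real, Real.norm_eq_abs]
    apply mul_le_of_le_one_right (abs_nonneg _)
    rw [Complex.norm_exp, Real.exp_le_one_iff]
    simp; positivity
  have h3 := (Complex.re_le_norm _).trans h1
  have h4 := (Complex.re_le_norm _).trans h2
  unfold charFn
  rw [Complex.sub_re, Complex.sub_re, Complex.one_re]
  linarith

theorem charFn_lower_bound {τ ξ : ℝ} (hτ : 0 < τ) (hξ : |ξ| < 1) {N : ℝ → ℝ}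
    (hN : ContinuousOn N (Set.Icc 0 τ)) (h0 : ∀ s : ℂ, 0 ≤ s.re → charFn τ ξ N s ≠ 0) :
    ∃ κ : ℝ, 0 < κ ∧ ∀ s : ℂ, 0 ≤ s.re → κ ≤ ‖charFn τ ξ N s‖ := by
  obtain ⟨R, hR, h⟩ := charFn_re_ge hτ hξ hN
  have hK : IsCompact (Metric.closedBall (0:ℂ) R ∩ {s : ℂ | 0 ≤ s.re}) :=
    (isCompact_closedBall _ _).inter_right (isClosed_le continuous_const Complex.continuous_re)
  obtain ⟨s₀, hs₀, hmin⟩ := hK.exists_isMinOn ⟨0, by simp [hR.le]⟩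
    (f := fun s => ‖charFn τ ξ N s‖) (charFn_differentiable hτ hN).continuous.norm.continuousOn
  refine ⟨min ‖charFn τ ξ N s₀‖ ((1 - |ξ|) / 2),
    lt_min (norm_pos_iff.2 (h0 s₀ hs₀.2)) (by linarith), fun s hs => ?_⟩
  by_cases hsR : R ≤ ‖s‖
  · exact (min_le_right _ _).trans ((h s hs hsR).trans (Complex.re_le_norm _))
  · refine (min_le_left _ _).trans (hmin ⟨?_, hs⟩)
    simp; linarith

/-- On the vertical line `Re s = σ` the characteristic function is the Fourier symbol of the equation
satisfied by `e^{-σt} z(t)`. -/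
theorem charFn_eq_symbol {τ ξ : ℝ} (hτ : 0 < τ) {N : ℝ → ℝ} (σ x : ℝ) :
    1 - ((ξ * Real.exp (-σ * τ) : ℝ) : ℂ) * Complex.exp (-(2 * π * x * τ * I))
      - 𝓕 (fun ν : ℝ => (((Set.Ioc 0 τ).indicator N ν * Real.exp (-σ * ν) : ℝ) : ℂ)) x
      = charFn τ ξ N (σ + 2 * π * x * I) := by
  unfold charFn
  rw [Real.fourier_real_eq_integral_exp_smul, intervalIntegral.integral_of_le hτ.le,
    ← integral_indicator measurableSet_Ioc]
  congr 1
  · congr 1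
    push_cast
    rw [mul_assoc, ← Complex.exp_add]
    congr 2; ring
  · congr 1; ext ν
    by_cases hν : ν ∈ Set.Ioc 0 τ
    · simp only [Set.indicator_of_mem hν, smul_eq_mul]
      push_cast
      rw [mul_left_comm, ← Complex.exp_add]
      congr 2; ring
    · simp [Set.indicator_of_notMem hν]

end

/-! ### Weighted `L²` estimates -/

section

open scoped FourierTransform ENNReal

/-- A regularisation of the weight `e^{εt}`: it increases to `e^{εt}` as `δ ↓ 0`, decays like
`e^{-εt}` at `+∞` for fixed `δ > 0`, and its variation over a time `τ` is controlled uniformly in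
`δ` (`regWeight_sub_le`). -/
noncomputable def regWeight (ε δ t : ℝ) : ℝ := Real.exp (ε * t) / (1 + δ * Real.exp (2 * ε * t))

theorem regWeight_pos {ε δ : ℝ} (hδ : 0 < δ) (t : ℝ) : 0 < regWeight ε δ t := by
  unfold regWeight; positivity

theorem regWeight_continuous {ε δ : ℝ} (hδ : 0 < δ) : Continuous (regWeight ε δ) := by
  unfold regWeight
  refine Continuous.div (by fun_prop) (by fun_prop) fun t => ?_
  positivity

theorem regWeight_le_exp {ε δ : ℝ} (hδ : 0 < δ) (t : ℝ) : regWeight ε δ t ≤ Real.exp (ε * t) := by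
  unfold regWeight
  apply div_le_self (by positivity)
  have : 0 < δ * Real.exp (2 * ε * t) := by positivity
  linarith

theorem regWeight_le_exp_neg {ε δ : ℝ} (hδ : 0 < δ) (t : ℝ) :
    regWeight ε δ t ≤ δ⁻¹ * Real.exp (-(ε * t)) := by
  unfold regWeight
  rw [div_le_iff₀ (by positivity)]
  have h1 : Real.exp (-(ε * t)) * Real.exp (2 * ε * t) = Real.exp (ε * t) := by
    rw [← Real.exp_add]; ring_nf
  have h2 : δ⁻¹ * Real.exp (-(ε * t)) * (1 + δ * Real.exp (2 * ε * t))
      = δ⁻¹ * Real.exp (-(ε * t)) + Real.exp (ε * t) := by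
    rw [← h1]; field_simp
  rw [h2]
  have : 0 < δ⁻¹ * Real.exp (-(ε * t)) := by positivity
  linarith

theorem regWeight_sub_le {ε δ τ : ℝ} (hε : 0 < ε) (hδ : 0 < δ) {t ν : ℝ} (h0 : 0 ≤ ν)
    (h1 : ν ≤ τ) : |regWeight ε δ t - regWeight ε δ (t - ν)| ≤
      (Real.exp (ε * τ) - 1) * regWeight ε δ (t - ν) := by
  set a := Real.exp (ε * ν) with ha
  have ha1 : 1 ≤ a := Real.one_le_exp (by positivity)
  have haτ : a ≤ Real.exp (ε * τ) := Real.exp_le_exp.2 (by gcongr)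
  set x := Real.exp (ε * (t - ν)) with hx
  have hx0 : 0 < x := Real.exp_pos _
  have e1 : Real.exp (ε * t) = a * x := by rw [ha, hx, ← Real.exp_add]; ring_nf
  have e2 : Real.exp (2 * ε * t) = (a * x) ^ 2 := by rw [← e1, ← Real.exp_nat_mul]; push_cast; ring_nf
  have e3 : Real.exp (2 * ε * (t - ν)) = x ^ 2 := by rw [hx, ← Real.exp_nat_mul]; push_cast; ring_nf
  have hle : |regWeight ε δ t - regWeight ε δ (t - ν)| ≤ (a - 1) * regWeight ε δ (t - ν) := by
    unfold regWeight
    rw [e1, e2, e3, ← hx]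
    have hd1 : 0 < 1 + δ * (a * x) ^ 2 := by positivity
    have hd2 : 0 < 1 + δ * x ^ 2 := by positivity
    have ha0 : 0 < a := by linarith
    rw [abs_le]
    constructor
    · have : 0 ≤ a * x / (1 + δ * (a * x) ^ 2) - x / (1 + δ * x ^ 2)
          + (a - 1) * (x / (1 + δ * x ^ 2)) := by
        have : a * x / (1 + δ * (a * x) ^ 2) - x / (1 + δ * x ^ 2)
          + (a - 1) * (x / (1 + δ * x ^ 2)) =
          (x * ((a * (1 + δ * x ^ 2) + (a - 2) * (1 + δ * (a * x) ^ 2)))) /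
            ((1 + δ * (a * x) ^ 2) * (1 + δ * x ^ 2)) := by
          field_simp; ring
        rw [this]
        apply div_nonneg _ (by positivity)
        apply mul_nonneg hx0.le
        have : a * (1 + δ * x ^ 2) + (a - 2) * (1 + δ * (a * x) ^ 2)
          = 2 * (a - 1) + δ * x ^ 2 * a * (a - 1) ^ 2 := by ring
        rw [this]
        have : 0 ≤ a - 1 := by linarith
        positivity
      linarith
    · have : x * a / (1 + δ * (a * x) ^ 2) ≤ a * (x / (1 + δ * x ^ 2)) := by
        rw [mul_div_assoc', mul_comm x a]
        gcongr
        nlinarith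
      rw [mul_comm x a] at this
      linarith
  refine hle.trans ?_
  gcongr
  exact (regWeight_pos hδ _).le

theorem measurable_conv {n u : ℝ → ℝ} (hn : Measurable n) (hu : Measurable u) :
    Measurable (fun t => ∫ ν, n ν * u (t - ν)) := by
  have : StronglyMeasurable (fun p : ℝ × ℝ => n p.2 * u (p.1 - p.2)) :=
    (by fun_prop : Measurable fun p : ℝ × ℝ => n p.2 * u (p.1 - p.2)).stronglyMeasurable
  exact this.integral_prod_right.measurable

theorem integrable_kernel_mul {τ Nm : ℝ} {n Z f : ℝ → ℝ} (hn : Measurable n)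
    (hnb : ∀ ν, |n ν| ≤ Nm) (hn0 : ∀ ν, ν ∉ Set.Ioc 0 τ → n ν = 0)
    (hZ : LocallyIntegrable Z) (hf : Continuous f) (t : ℝ) :
    Integrable (fun ν => n ν * (f ν * Z (t - ν))) := by
  have h1 : IntegrableOn (fun ν => Z (t - ν)) (Set.Icc 0 τ) := by
    have hmp : MeasurePreserving (fun ν : ℝ => t - ν) volume volume := volume.measurePreserving_sub_left t
    have he : MeasurableEmbedding (fun ν : ℝ => t - ν) :=
      (MeasurableEquiv.subLeft t).measurableEmbedding
    have := (hmp.integrableOn_comp_preimage he (f := Z) (s := Set.Icc (t - τ) t)).2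
      (hZ.integrableOn_isCompact isCompact_Icc)
    refine this.mono_set ?_
    intro ν hν
    simp only [Set.mem_preimage, Set.mem_Icc] at *
    constructor <;> linarith
  have h2 : IntegrableOn (fun ν => f ν * Z (t - ν)) (Set.Icc 0 τ) :=
    h1.continuousOn_mul hf.continuousOn isCompact_Icc
  have h3 : IntegrableOn (fun ν => n ν * (f ν * Z (t - ν))) (Set.Icc 0 τ) :=
    Integrable.bdd_mul (c := Nm) h2 hn.aestronglyMeasurable (Filter.Eventually.of_forall hnb)
  refine (integrableOn_iff_integrable_of_support_subset ?_).1 h3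
  intro ν hν
  by_contra hc
  apply hν
  simp only
  rw [hn0 ν (fun h => hc (Set.Ioc_subset_Icc_self h)), zero_mul]

theorem integrable_kernel {τ Nm : ℝ} {n f : ℝ → ℝ} (hn : Measurable n)
    (hnb : ∀ ν, |n ν| ≤ Nm) (hn0 : ∀ ν, ν ∉ Set.Ioc 0 τ → n ν = 0) (hf : Continuous f) :
    Integrable (fun ν => n ν * f ν) := by
  have := integrable_kernel_mul (Z := fun _ => 1) hn hnb hn0 (locallyIntegrable_const _) hf 0
  simpa using this

/-- The weighted estimate behind `step_lemma`. The weight commutes with the delay operator up to an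
error at most `(e^{ετ} - 1)(|ξ| + Nm τ)` times the weighted norm of `Z`, which `hsmall` absorbs into
half of the lower bound `κ` for the symbol. -/
theorem step_aux {τ ξ σ ε δ κ Nm : ℝ} (hτ : 0 < τ) (hσ : 0 ≤ σ) (hε : 0 < ε) (hδ : 0 < δ)
    (hκ : 0 < κ) {n Z G : ℝ → ℝ}
    (hn : Measurable n) (hnb : ∀ ν, |n ν| ≤ Nm) (hn0 : ∀ ν, ν ∉ Set.Ioc 0 τ → n ν = 0)
    (hZ : Measurable Z) (hZloc : LocallyIntegrable Z) (hZ0 : ∀ t < -τ, Z t = 0)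
    (hG : ∀ t, G t = Z t - ξ * Z (t - τ) - ∫ ν, n ν * Z (t - ν))
    (hsym : ∀ x : ℝ, κ ≤ ‖1 - ((ξ * Real.exp (-σ * τ) : ℝ) : ℂ) *
      Complex.exp (-(2 * π * x * τ * I)) - 𝓕 (fun ν : ℝ => ((n ν * Real.exp (-σ * ν) : ℝ) : ℂ)) x‖)
    (hsmall : (Real.exp (ε * τ) - 1) * (|ξ| + Nm * τ) ≤ κ / 2)
    (hfin : MemLp (fun t => Real.exp (-σ * t) * Z t) 2) :
    eLpNorm (fun t => regWeight ε δ t * (Real.exp (-σ * t) * Z t)) 2 volume ≤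
      ENNReal.ofReal (2 / κ) * eLpNorm (fun t => Real.exp (-(σ - ε) * t) * G t) 2 volume := by
  set w := regWeight ε δ with hw
  have hwc : Continuous w := regWeight_continuous hδ
  have hNm : 0 ≤ Nm := (abs_nonneg _).trans (hnb 0)
  set θ := Real.exp (ε * τ) - 1 with hθ
  have hθ0 : 0 ≤ θ := by
    have : 1 ≤ Real.exp (ε * τ) := Real.one_le_exp (by positivity)
    linarith
  set u := fun t => w t * (Real.exp (-σ * t) * Z t) with hu
  have hum : Measurable u := by
    have := hwc.measurable
    fun_prop
  have hu2 : MemLp u 2 := by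
    refine MemLp.of_le_mul (c := 1 + δ⁻¹) hfin hum.aestronglyMeasurable
      (Filter.Eventually.of_forall fun t => ?_)
    rw [hu, norm_mul]
    gcongr
    rw [Real.norm_of_nonneg (regWeight_pos hδ t).le]
    rcases le_total 0 t with h | h
    · refine (regWeight_le_exp_neg hδ t).trans ?_
      have : Real.exp (-(ε * t)) ≤ 1 := Real.exp_le_one_iff.2 (by nlinarith)
      have hδ' : 0 < δ⁻¹ := by positivity
      nlinarith
    · refine (regWeight_le_exp hδ t).trans ?_
      have : Real.exp (ε * t) ≤ 1 := Real.exp_le_one_iff.2 (by nlinarith)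
      have hδ' : 0 < δ⁻¹ := by positivity
      linarith
  have hu1 : Integrable u := by
    have hW : MemLp ((Set.Ici (-τ)).indicator w) 2 := by
      have hE : MemLp ((Set.Ici (-τ)).indicator (fun t => Real.exp (-(ε * t)))) 2 := by
        rw [memLp_two_iff_integrable_sq]
        · have h1 := (integrableOn_Ici_iff_integrableOn_Ioi (b := -τ)).2
            (exp_neg_integrableOn_Ioi (-τ) (b := 2 * ε) (by positivity))
          rw [← integrable_indicator_iff measurableSet_Ici] at h1
          refine h1.congr (Filter.Eventually.of_forall fun t => ?_)
          by_cases ht : t ∈ Set.Ici (-τ)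
          · simp only [Set.indicator_of_mem ht]
            rw [← Real.exp_nat_mul]; congr 1; push_cast; ring
          · simp [Set.indicator_of_notMem ht]
        · exact (Measurable.indicator (by fun_prop) measurableSet_Ici).aestronglyMeasurable
      refine MemLp.of_le_mul (c := δ⁻¹) hE
        (hwc.measurable.indicator measurableSet_Ici).aestronglyMeasurable
        (Filter.Eventually.of_forall fun t => ?_)
      by_cases ht : t ∈ Set.Ici (-τ)
      · simp only [Set.indicator_of_mem ht]
        rw [Real.norm_of_nonneg (regWeight_pos hδ t).le, Real.norm_of_nonneg (Real.exp_pos _).le]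
        exact regWeight_le_exp_neg hδ t
      · simp [Set.indicator_of_notMem ht]
    have := MemLp.integrable_mul hW hfin
    refine this.congr (Filter.Eventually.of_forall fun t => ?_)
    by_cases ht : t ∈ Set.Ici (-τ)
    · simp [hu, Set.indicator_of_mem ht]
    · have : Z t = 0 := hZ0 t (by simpa using ht)
      simp [hu, this]
  set nσ := fun ν => n ν * Real.exp (-σ * ν) with hnσ
  have hnσint : Integrable nσ := integrable_kernel hn hnb hn0 (by fun_prop)
  have hnσm : Measurable nσ := by fun_prop
  set v := fun t => u t - (ξ * Real.exp (-σ * τ)) * u (t - τ) - ∫ ν, nσ ν * u (t - ν) with hv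
  have hkey := mul_eLpNorm_le_of_symbol_real hu1 hu2 hnσint (ξ * Real.exp (-σ * τ)) τ κ hsym v
    (fun t => rfl)
  have hvm : Measurable v := by
    have := measurable_conv hnσm hum
    fun_prop
  set g := fun t => Real.exp (-σ * t) * w t * G t with hg
  have hGm : Measurable G := by
    have := measurable_conv hn hZ
    rw [show G = fun t => Z t - ξ * Z (t - τ) - ∫ ν, n ν * Z (t - ν) from funext hG]
    fun_prop
  have hgm : Measurable g := by
    have := hwc.measurable
    fun_prop
  set D1 := fun t => ξ * (Real.exp (-σ * t) * (w t - w (t - τ)) * Z (t - τ)) with hD1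
  have hD1m : Measurable D1 := by
    have := hwc.measurable
    fun_prop
  set D2 := fun t => v t - g t - D1 t with hD2
  have hD2m : Measurable D2 := by fun_prop
  have hpt : ∀ t ν, 0 ≤ ν → ν ≤ τ →
      |Real.exp (-σ * t) * (w t - w (t - ν)) * Z (t - ν)| ≤ θ * |u (t - ν)| := by
    intro t ν h0 h1
    rw [hu, abs_mul, abs_mul, abs_mul, abs_mul, Real.abs_exp, Real.abs_exp,
      abs_of_pos (regWeight_pos hδ (t - ν))]
    have h2 := regWeight_sub_le hε hδ (t := t) h0 h1
    have h3 : Real.exp (-σ * t) ≤ Real.exp (-σ * (t - ν)) := Real.exp_le_exp.2 (by nlinarith)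
    calc _ ≤ Real.exp (-σ * (t - ν)) * (θ * w (t - ν)) * |Z (t - ν)| := by gcongr
      _ = _ := by ring
  have hD1n : eLpNorm D1 2 volume ≤ ENNReal.ofReal (|ξ| * θ) * eLpNorm u 2 volume := by
    rw [← eLpNorm_shift u τ hum]
    refine (eLpNorm_le_mul_eLpNorm_of_ae_le_mul
      (Filter.Eventually.of_forall fun t => ?_) 2)
    rw [hD1, Real.norm_eq_abs, abs_mul, Real.norm_eq_abs]
    exact (mul_le_mul_of_nonneg_left (hpt t τ hτ.le le_rfl) (abs_nonneg _)).trans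
      (le_of_eq (by ring))
  have hD2eq : ∀ t, D2 t = ∫ ν, n ν * ((Real.exp (-σ * t) * (w t - w (t - ν))) * Z (t - ν)) := by
    intro t
    have i1 : Integrable (fun ν => n ν * ((Real.exp (-σ * t) * w t) * Z (t - ν))) :=
      integrable_kernel_mul hn hnb hn0 hZloc continuous_const t
    have i2 : Integrable (fun ν => n ν * ((Real.exp (-σ * t) * w (t - ν)) * Z (t - ν))) :=
      integrable_kernel_mul hn hnb hn0 hZloc (by fun_prop) t
    have e1 : ∫ ν, n ν * ((Real.exp (-σ * t) * (w t - w (t - ν))) * Z (t - ν)) =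
        (∫ ν, n ν * ((Real.exp (-σ * t) * w t) * Z (t - ν)))
        - ∫ ν, n ν * ((Real.exp (-σ * t) * w (t - ν)) * Z (t - ν)) := by
      rw [← integral_sub i1 i2]; congr 1; ext ν; ring
    have e2 : ∫ ν, n ν * ((Real.exp (-σ * t) * w t) * Z (t - ν))
        = Real.exp (-σ * t) * w t * ∫ ν, n ν * Z (t - ν) := by
      rw [← integral_const_mul]; congr 1; ext ν; ring
    have hexp : ∀ ν, Real.exp (-σ * ν) * Real.exp (-σ * (t - ν)) = Real.exp (-σ * t) := by
      intro ν; rw [← Real.exp_add]; ring_nf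
    have e3 : ∫ ν, n ν * ((Real.exp (-σ * t) * w (t - ν)) * Z (t - ν))
        = ∫ ν, nσ ν * u (t - ν) := by
      congr 1; ext ν; simp only [hnσ, hu]; rw [← hexp ν]; ring
    rw [e1, e2, e3]
    simp only [hD2, hv, hg, hD1, hG]
    rw [hu]
    simp only
    rw [← hexp τ]; ring
  have hD2n : eLpNorm D2 2 volume ≤ ENNReal.ofReal (Nm * θ * τ) * eLpNorm u 2 volume := by
    refine eLpNorm_le_of_conv (τ := τ) (k := fun _ => ENNReal.ofReal (Nm * θ)) measurable_const hum
      ?_ fun t => ?_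
    · simp only [lintegral_const, Measure.restrict_apply_univ, Real.volume_Ioc, sub_zero]
      rw [show ENNReal.ofReal (Nm * θ * τ) = ENNReal.ofReal (Nm * θ) * ENNReal.ofReal τ from
        ENNReal.ofReal_mul (by positivity)]
      exact le_of_eq (by ring)
    · rw [hD2eq]
      refine (enorm_integral_le_lintegral_enorm _).trans ?_
      rw [← lintegral_indicator measurableSet_Ioc]
      refine lintegral_mono fun ν => ?_
      by_cases hν : ν ∈ Set.Ioc 0 τ
      · rw [Set.indicator_of_mem hν, ← ofReal_norm, ← ofReal_norm,
          ← ENNReal.ofReal_mul (by positivity)]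
        apply ENNReal.ofReal_le_ofReal
        rw [norm_mul, Real.norm_eq_abs, Real.norm_eq_abs, Real.norm_eq_abs]
        exact (mul_le_mul (hnb ν) (hpt t ν hν.1.le hν.2) (abs_nonneg _) hNm).trans
          (le_of_eq (by ring))
      · simp [hn0 ν hν]
  have hgn : eLpNorm g 2 volume ≤ eLpNorm (fun t => Real.exp (-(σ - ε) * t) * G t) 2 volume := by
    refine eLpNorm_mono fun t => ?_
    simp only [hg]
    rw [norm_mul _ (G t), norm_mul _ (G t)]
    refine mul_le_mul_of_nonneg_right ?_ (norm_nonneg _)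
    rw [Real.norm_of_nonneg, Real.norm_of_nonneg (Real.exp_pos _).le]
    · have := regWeight_le_exp (ε := ε) hδ t
      calc _ ≤ Real.exp (-σ * t) * Real.exp (ε * t) := by gcongr
        _ = _ := by rw [← Real.exp_add]; ring_nf
    · exact mul_nonneg (Real.exp_pos _).le (regWeight_pos hδ t).le
  set b := eLpNorm (fun t => Real.exp (-(σ - ε) * t) * G t) 2 volume
  set a := eLpNorm u 2 volume with ha
  have hafin : a ≠ ⊤ := hu2.2.ne
  have hvn : eLpNorm v 2 volume ≤ b + ENNReal.ofReal (κ / 2) * a := by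
    have : v = g + (D1 + D2) := by ext t; simp [hD2]
    rw [this]
    calc _ ≤ eLpNorm g 2 volume + (eLpNorm D1 2 volume + eLpNorm D2 2 volume) :=
          (eLpNorm_add_le hgm.aestronglyMeasurable (hD1m.add hD2m).aestronglyMeasurable
            (by norm_num)).trans (add_le_add le_rfl (eLpNorm_add_le hD1m.aestronglyMeasurable
              hD2m.aestronglyMeasurable (by norm_num)))
      _ ≤ b + (ENNReal.ofReal (|ξ| * θ) * a + ENNReal.ofReal (Nm * θ * τ) * a) := by gcongr
      _ = b + ENNReal.ofReal (|ξ| * θ + Nm * θ * τ) * a := by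
          rw [ENNReal.ofReal_add (by positivity) (by positivity), add_mul]
      _ ≤ _ := by
          gcongr
          refine le_trans (le_of_eq ?_) hsmall
          ring
  have h1 : ENNReal.ofReal (κ / 2) * a + ENNReal.ofReal (κ / 2) * a
      ≤ b + ENNReal.ofReal (κ / 2) * a := by
    rw [← add_mul, ← ENNReal.ofReal_add (by positivity) (by positivity), add_halves]
    exact hkey.trans hvn
  have h2 : ENNReal.ofReal (κ / 2) * a ≤ b :=
    (ENNReal.add_le_add_iff_right (ENNReal.mul_ne_top ENNReal.ofReal_ne_top hafin)).1 h1
  calc a = ENNReal.ofReal (2 / κ) * (ENNReal.ofReal (κ / 2) * a) := by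
        rw [← mul_assoc, ← ENNReal.ofReal_mul (by positivity)]
        have : 2 / κ * (κ / 2) = 1 := by field_simp
        rw [this]; simp
    _ ≤ _ := by gcongr

/-- Moves the exponential weight by `ε`: if `e^{-σt} Z` is square integrable and the symbol on the
line `Re s = σ` is bounded below by `κ`, then `e^{-(σ-ε)t} Z` is controlled in `L²` by the source `G`.
It follows from `step_aux` by letting `δ ↓ 0`. -/
theorem step_lemma {τ ξ σ ε κ Nm : ℝ} (hτ : 0 < τ) (hσ : 0 ≤ σ) (hε : 0 < ε)
    (hκ : 0 < κ) {n Z G : ℝ → ℝ}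
    (hn : Measurable n) (hnb : ∀ ν, |n ν| ≤ Nm) (hn0 : ∀ ν, ν ∉ Set.Ioc 0 τ → n ν = 0)
    (hZ : Measurable Z) (hZloc : LocallyIntegrable Z) (hZ0 : ∀ t < -τ, Z t = 0)
    (hG : ∀ t, G t = Z t - ξ * Z (t - τ) - ∫ ν, n ν * Z (t - ν))
    (hsym : ∀ x : ℝ, κ ≤ ‖1 - ((ξ * Real.exp (-σ * τ) : ℝ) : ℂ) *
      Complex.exp (-(2 * π * x * τ * I)) - 𝓕 (fun ν : ℝ => ((n ν * Real.exp (-σ * ν) : ℝ) : ℂ)) x‖)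
    (hsmall : (Real.exp (ε * τ) - 1) * (|ξ| + Nm * τ) ≤ κ / 2)
    (hfin : MemLp (fun t => Real.exp (-σ * t) * Z t) 2) :
    eLpNorm (fun t => Real.exp (-(σ - ε) * t) * Z t) 2 volume ≤
      ENNReal.ofReal (2 / κ) * eLpNorm (fun t => Real.exp (-(σ - ε) * t) * G t) 2 volume := by
  have hδ : ∀ k : ℕ, (0:ℝ) < 1 / ((k : ℝ) + 1) := fun k => by positivity
  have hlim := Lp.eLpNorm_lim_le_liminf_eLpNorm (p := 2) (μ := volume)
    (f := fun (k : ℕ) t => regWeight ε (1 / ((k : ℝ) + 1)) t * (Real.exp (-σ * t) * Z t))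
    (fun k => by
      have := (regWeight_continuous (ε := ε) (hδ k)).measurable
      exact (by fun_prop : Measurable fun t => regWeight ε (1 / ((k : ℝ) + 1)) t *
        (Real.exp (-σ * t) * Z t)).aestronglyMeasurable)
    (fun t => Real.exp (-(σ - ε) * t) * Z t)
    (Filter.Eventually.of_forall fun t => by
      have h1 : Filter.Tendsto (fun k : ℕ => regWeight ε (1 / ((k : ℝ) + 1)) t) Filter.atTop
          (nhds (Real.exp (ε * t))) := by
        unfold regWeight
        have h2 : Filter.Tendsto (fun k : ℕ => 1 + (1 / ((k : ℝ) + 1)) * Real.exp (2 * ε * t))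
          Filter.atTop (nhds (1 + 0 * Real.exp (2 * ε * t))) :=
          (tendsto_one_div_add_atTop_nhds_zero_nat.mul_const _).const_add 1
        have := (tendsto_const_nhds (x := Real.exp (ε * t))).div h2 (by simp)
        rw [zero_mul, add_zero, div_one] at this
        exact this
      have h3 := h1.mul_const (Real.exp (-σ * t) * Z t)
      convert h3 using 2
      rw [← mul_assoc, ← Real.exp_add]; ring_nf)
  refine hlim.trans ?_
  refine (Filter.liminf_le_of_frequently_le' (Filter.Eventually.frequently
    (Filter.Eventually.of_forall fun k => ?_)))
  exact step_aux hτ hσ hε (hδ k) hκ hn hnb hn0 hZ hZloc hZ0 hG hsym hsmall hfin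

/-- The source `G` obtained by applying the delay operator to `Z` vanishes for `t ≥ 0` when `Z` solves
the equation there; what remains lives on `[-τ, 0)` and is controlled by the initial data. -/
theorem source_bound {τ ξ Nm : ℝ} (hτ : 0 < τ) {n Z G : ℝ → ℝ}
    (hn : Measurable n) (hnb : ∀ ν, |n ν| ≤ Nm) (hn0 : ∀ ν, ν ∉ Set.Ioc 0 τ → n ν = 0)
    (hZ : Measurable Z) (hZ0 : ∀ t < -τ, Z t = 0)
    (hG : ∀ t, G t = Z t - ξ * Z (t - τ) - ∫ ν, n ν * Z (t - ν)) (hG0 : ∀ t, 0 ≤ t → G t = 0) :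
    (∀ t < -τ, G t = 0) ∧ eLpNorm G 2 volume ≤
      ENNReal.ofReal (1 + Nm * τ) * eLpNorm ((Set.Ico (-τ) 0).indicator Z) 2 volume := by
  have hNm : 0 ≤ Nm := (abs_nonneg _).trans (hnb 0)
  have hGneg : ∀ t < -τ, G t = 0 := by
    intro t ht
    have h1 : ∀ ν, n ν * Z (t - ν) = 0 := by
      intro ν
      by_cases hν : ν ∈ Set.Ioc 0 τ
      · rw [hZ0 (t - ν) (by linarith [hν.1]), mul_zero]
      · rw [hn0 ν hν, zero_mul]
    rw [hG, hZ0 t ht, hZ0 (t - τ) (by linarith)]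
    simp [h1]
  refine ⟨hGneg, ?_⟩
  set Y := (Set.Ico (-τ) 0).indicator Z with hY
  have hYm : Measurable Y := hZ.indicator measurableSet_Ico
  set F := (Set.Ico (-τ) 0).indicator fun t => ∫ ν, n ν * Y (t - ν) with hF
  have hFm : Measurable F := (measurable_conv hn hYm).indicator measurableSet_Ico
  have hGe : G = Y - F := by
    ext t
    by_cases ht : t ∈ Set.Ico (-τ) 0
    · have h1 : ∀ ν, n ν * Z (t - ν) = n ν * Y (t - ν) := by
        intro ν
        by_cases hν : ν ∈ Set.Ioc 0 τ
        · congr 1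
          by_cases h2 : -τ ≤ t - ν
          · rw [hY, Set.indicator_of_mem]
            exact ⟨h2, by linarith [hν.1, ht.2]⟩
          · rw [hY, Set.indicator_of_notMem (fun h => h2 h.1)]
            exact hZ0 _ (not_le.1 h2)
        · rw [hn0 ν hν, zero_mul, zero_mul]
      rw [hG, hZ0 (t - τ) (by linarith [ht.2])]
      simp only [Pi.sub_apply, hF, Set.indicator_of_mem ht, hY, h1]
      simp
    · simp only [Pi.sub_apply, hF, hY, Set.indicator_of_notMem ht, sub_zero]
      by_cases h2 : 0 ≤ t
      · exact hG0 t h2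
      · refine hGneg t ?_
        by_contra h3
        exact ht ⟨by linarith, by linarith⟩
  have hFn : eLpNorm F 2 volume ≤ ENNReal.ofReal (Nm * τ) * eLpNorm Y 2 volume := by
    refine eLpNorm_le_of_conv (τ := τ) (k := fun _ => ENNReal.ofReal Nm) measurable_const hYm
      ?_ fun t => ?_
    · simp only [lintegral_const, Measure.restrict_apply_univ, Real.volume_Ioc, sub_zero]
      rw [ENNReal.ofReal_mul hNm]
      exact le_of_eq (by ring)
    · refine le_trans (b := ‖∫ ν, n ν * Y (t - ν)‖ₑ) ?_ ?_
      · rw [hF]; exact enorm_indicator_le_enorm_self _ _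
      refine (enorm_integral_le_lintegral_enorm _).trans ?_
      rw [← lintegral_indicator measurableSet_Ioc]
      refine lintegral_mono fun ν => ?_
      by_cases hν : ν ∈ Set.Ioc 0 τ
      · rw [Set.indicator_of_mem hν, enorm_mul]
        gcongr
        rw [← ofReal_norm]
        exact ENNReal.ofReal_le_ofReal (hnb ν)
      · simp [hn0 ν hν]
  rw [hGe]
  calc _ ≤ eLpNorm Y 2 volume + eLpNorm F 2 volume :=
        eLpNorm_sub_le hYm.aestronglyMeasurable hFm.aestronglyMeasurable (by norm_num)
    _ ≤ eLpNorm Y 2 volume + ENNReal.ofReal (Nm * τ) * eLpNorm Y 2 volume := by gcongr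
    _ = _ := by
      rw [ENNReal.ofReal_add zero_le_one (by positivity), ENNReal.ofReal_one, add_mul, one_mul]

/-- For `σ` large the delay operator is a contraction perturbation of the identity on the space weighted
by `e^{-σt}`, so solutions grow at most like `e^{σt}` in the `L²` sense. The bound is proved for the
truncations of `Z` to `(-∞, T]`, uniformly in `T`. -/
theorem energy_start {τ ξ Nm : ℝ} (hτ : 0 < τ) (hξ : |ξ| < 1) (hNm : 0 ≤ Nm) :
    ∃ σ₀ : ℝ, 0 < σ₀ ∧ ∀ σ, σ₀ ≤ σ → ∀ n Z G : ℝ → ℝ, Measurable n →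
      (∀ ν, |n ν| ≤ Nm) → (∀ ν, ν ∉ Set.Ioc 0 τ → n ν = 0) →
      Measurable Z → LocallyIntegrable Z → (∀ t < -τ, Z t = 0) →
      (∀ T, MemLp ((Set.Iic T).indicator Z) 2) →
      (∀ t, G t = Z t - ξ * Z (t - τ) - ∫ ν, n ν * Z (t - ν)) → (∀ t, 0 ≤ t → G t = 0) →
      MemLp (fun t => Real.exp (-σ * t) * Z t) 2 := by
  set K : ℝ := (1 - |ξ|) / 2 with hK
  have hK0 : 0 < K := by rw [hK]; linarith
  refine ⟨Nm ^ 2 * τ / (2 * K ^ 2) + 1, by positivity, ?_⟩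
  intro σ hσ n Z G hn hnb hn0 hZ hZloc hZ0 hZT hG hG0
  have hσ0 : 0 < σ := lt_of_lt_of_le (by positivity) hσ
  obtain ⟨hGneg, hGn⟩ := source_bound hτ hn hnb hn0 hZ hZ0 hG hG0
  have hGm : Measurable G := by
    have := measurable_conv hn hZ
    rw [show G = fun t => Z t - ξ * Z (t - τ) - ∫ ν, n ν * Z (t - ν) from funext hG]
    fun_prop
  have hYfin : eLpNorm ((Set.Ico (-τ) 0).indicator Z) 2 volume < ⊤ := by
    refine lt_of_le_of_lt (eLpNorm_mono fun t => ?_) (hZT 0).2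
    by_cases ht : t ∈ Set.Ico (-τ) 0
    · rw [Set.indicator_of_mem ht, Set.indicator_of_mem (show t ∈ Set.Iic 0 from ht.2.le)]
    · rw [Set.indicator_of_notMem ht]; simp
  have hGfin : eLpNorm G 2 volume < ⊤ :=
    lt_of_le_of_lt hGn (ENNReal.mul_lt_top ENNReal.ofReal_lt_top hYfin)
  set g := fun t => Real.exp (-σ * t) * G t with hg
  have hgm : Measurable g := by fun_prop
  have hgfin : eLpNorm g 2 volume < ⊤ := by
    refine lt_of_le_of_lt (eLpNorm_le_mul_eLpNorm_of_ae_le_mul (c := Real.exp (σ * τ))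
      (g := G) (Filter.Eventually.of_forall fun t => ?_) 2)
      (ENNReal.mul_lt_top ENNReal.ofReal_lt_top hGfin)
    rw [hg, norm_mul, Real.norm_of_nonneg (Real.exp_pos _).le]
    by_cases ht : t < -τ
    · simp [hGneg t ht]
    · exact mul_le_mul_of_nonneg_right (Real.exp_le_exp.2 (by nlinarith [not_lt.1 ht])) (norm_nonneg _)
  set v := fun (T : ℝ) => (Set.Iic T).indicator fun t => Real.exp (-σ * t) * Z t with hv
  have hvm : ∀ T, Measurable (v T) := fun T =>
    Measurable.indicator (by fun_prop) measurableSet_Iic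
  have hvfin : ∀ T, eLpNorm (v T) 2 volume < ⊤ := by
    intro T
    refine lt_of_le_of_lt (eLpNorm_le_mul_eLpNorm_of_ae_le_mul (c := Real.exp (σ * τ))
      (g := (Set.Iic T).indicator Z) (Filter.Eventually.of_forall fun t => ?_) 2)
      (ENNReal.mul_lt_top ENNReal.ofReal_lt_top (hZT T).2)
    by_cases hT : t ∈ Set.Iic T
    · rw [hv]
      simp only [Set.indicator_of_mem hT]
      rw [norm_mul, Real.norm_of_nonneg (Real.exp_pos _).le]
      by_cases ht : t < -τ
      · simp [hZ0 t ht]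
      · exact mul_le_mul_of_nonneg_right (Real.exp_le_exp.2 (by nlinarith [not_lt.1 ht])) (norm_nonneg _)
    · simp [hv, Set.indicator_of_notMem hT]
  have hbound : ∀ T, eLpNorm (v T) 2 volume ≤ ENNReal.ofReal (1 / K) * eLpNorm g 2 volume := by
    intro T
    set a := eLpNorm (v T) 2 volume with ha
    set nσ := fun ν => n ν * Real.exp (-σ * ν) with hnσ
    have hnσm : Measurable nσ := by fun_prop
    set F := (Set.Iic T).indicator fun t => ∫ ν, nσ ν * v T (t - ν) with hF
    have hFm : Measurable F := (measurable_conv hnσm (hvm T)).indicator measurableSet_Iic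
    set H := (Set.Iic T).indicator fun t => (ξ * Real.exp (-σ * τ)) * v T (t - τ) with hH
    have hHm : Measurable H := by
      have := hvm T
      exact Measurable.indicator (by fun_prop) measurableSet_Iic
    set gT := (Set.Iic T).indicator g with hgT
    have hgTm : Measurable gT := hgm.indicator measurableSet_Iic
    have hexp : ∀ t ν, Real.exp (-σ * ν) * Real.exp (-σ * (t - ν)) = Real.exp (-σ * t) := by
      intro t ν; rw [← Real.exp_add]; ring_nf
    have hdec : v T = gT + (H + F) := by
      ext t
      by_cases hT : t ∈ Set.Iic T
      · have hT' : t ≤ T := hT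
        have hsh : ∀ ν, 0 ≤ ν → v T (t - ν) = Real.exp (-σ * (t - ν)) * Z (t - ν) := by
          intro ν hν
          simp only [hv]
          rw [Set.indicator_of_mem]
          exact le_trans (by linarith) hT'
        have e3 : ∫ ν, nσ ν * v T (t - ν) = Real.exp (-σ * t) * ∫ ν, n ν * Z (t - ν) := by
          rw [← integral_const_mul]; congr 1; ext ν
          by_cases hν : ν ∈ Set.Ioc 0 τ
          · rw [hsh ν hν.1.le, hnσ, ← hexp t ν]; ring
          · simp [hnσ, hn0 ν hν]
        simp only [Pi.add_apply, hF, hH, hgT, Set.indicator_of_mem hT]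
        rw [e3, hsh τ hτ.le]
        have := hsh 0 le_rfl
        rw [sub_zero] at this
        rw [this, hg]
        simp only [hG]
        rw [← hexp t τ]; ring
      · simp [hF, hH, hgT, hv, Set.indicator_of_notMem hT]
    have hHn : eLpNorm H 2 volume ≤ ENNReal.ofReal |ξ| * a := by
      rw [ha, ← eLpNorm_shift (v T) τ (hvm T)]
      refine (eLpNorm_le_mul_eLpNorm_of_ae_le_mul
        (Filter.Eventually.of_forall fun t => ?_) 2)
      rw [hH]
      refine (norm_indicator_le_norm_self _ _).trans ?_
      rw [norm_mul, norm_mul, Real.norm_eq_abs ξ, Real.norm_of_nonneg (Real.exp_pos _).le]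
      have : Real.exp (-σ * τ) ≤ 1 := Real.exp_le_one_iff.2 (by nlinarith)
      gcongr
      exact mul_le_of_le_one_right (abs_nonneg _) this
    have hFn : eLpNorm F 2 volume ≤ ENNReal.ofReal K * a := by
      refine eLpNorm_le_of_conv (τ := τ) (k := fun ν => ENNReal.ofReal (Nm * Real.exp (-σ * ν)))
        (by fun_prop) (hvm T) ?_ fun t => ?_
      · have h1 : (∫⁻ ν in Set.Ioc 0 τ, ENNReal.ofReal (Nm * Real.exp (-σ * ν)) ^ 2) ≤
            ENNReal.ofReal (Nm ^ 2 * (1 / (2 * σ))) := by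
          calc _ ≤ ∫⁻ ν in Set.Ioi 0, ENNReal.ofReal (Nm * Real.exp (-σ * ν)) ^ 2 :=
                lintegral_mono_set Set.Ioc_subset_Ioi_self
            _ = ∫⁻ ν in Set.Ioi 0, ENNReal.ofReal (Nm ^ 2 * Real.exp ((-(2 * σ)) * ν)) := by
                congr 1; ext ν
                rw [← ENNReal.ofReal_pow (by positivity), mul_pow, ← Real.exp_nat_mul]
                congr 3; push_cast; ring
            _ = ENNReal.ofReal (∫ ν in Set.Ioi 0, Nm ^ 2 * Real.exp ((-(2 * σ)) * ν)) := by
                rw [ofReal_integral_eq_lintegral_ofReal]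
                · exact (integrableOn_exp_mul_Ioi (by linarith) 0).const_mul _
                · exact Filter.Eventually.of_forall fun ν => by positivity
            _ ≤ _ := by
                apply ENNReal.ofReal_le_ofReal
                rw [integral_const_mul, integral_exp_mul_Ioi (by linarith)]
                simp
        refine (mul_le_mul_left h1 _).trans ?_
        rw [← ENNReal.ofReal_mul (by positivity), ← ENNReal.ofReal_pow hK0.le]
        apply ENNReal.ofReal_le_ofReal
        have h2 : Nm ^ 2 * τ / (2 * K ^ 2) ≤ σ := by linarith
        rw [div_le_iff₀ (by positivity)] at h2
        rw [show Nm ^ 2 * (1 / (2 * σ)) * τ = Nm ^ 2 * τ / (2 * σ) by ring,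
          div_le_iff₀ (by positivity)]
        linarith
      · refine le_trans (b := ‖∫ ν, nσ ν * v T (t - ν)‖ₑ) ?_ ?_
        · rw [hF]; exact enorm_indicator_le_enorm_self _ _
        refine (enorm_integral_le_lintegral_enorm _).trans ?_
        rw [← lintegral_indicator measurableSet_Ioc]
        refine lintegral_mono fun ν => ?_
        by_cases hν : ν ∈ Set.Ioc 0 τ
        · rw [Set.indicator_of_mem hν, enorm_mul]
          gcongr
          rw [← ofReal_norm, hnσ, norm_mul, Real.norm_of_nonneg (Real.exp_pos _).le]
          apply ENNReal.ofReal_le_ofReal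
          gcongr
          exact hnb ν
        · simp [hnσ, hn0 ν hν]
    have hgn : eLpNorm gT 2 volume ≤ eLpNorm g 2 volume :=
      eLpNorm_mono fun t => norm_indicator_le_norm_self _ _
    have hmain : a ≤ eLpNorm g 2 volume + ENNReal.ofReal (1 - K) * a := by
      calc a = eLpNorm (gT + (H + F)) 2 volume := by rw [ha, hdec]
        _ ≤ eLpNorm gT 2 volume + (eLpNorm H 2 volume + eLpNorm F 2 volume) :=
          (eLpNorm_add_le hgTm.aestronglyMeasurable (hHm.add hFm).aestronglyMeasurable
            (by norm_num)).trans (add_le_add le_rfl (eLpNorm_add_le hHm.aestronglyMeasurable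
              hFm.aestronglyMeasurable (by norm_num)))
        _ ≤ eLpNorm g 2 volume + (ENNReal.ofReal |ξ| * a + ENNReal.ofReal K * a) := by gcongr
        _ = _ := by
          rw [← add_mul, ← ENNReal.ofReal_add (abs_nonneg _) hK0.le]
          congr 3; rw [hK]; ring
    have hafin : a ≠ ⊤ := (hvfin T).ne
    have h1K : 0 ≤ 1 - K := by rw [hK]; linarith [abs_nonneg ξ]
    have h1 : ENNReal.ofReal K * a + ENNReal.ofReal (1 - K) * a
        ≤ eLpNorm g 2 volume + ENNReal.ofReal (1 - K) * a := by
      rw [← add_mul, ← ENNReal.ofReal_add hK0.le h1K]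
      simpa using hmain
    have h2 : ENNReal.ofReal K * a ≤ eLpNorm g 2 volume :=
      (ENNReal.add_le_add_iff_right (ENNReal.mul_ne_top ENNReal.ofReal_ne_top hafin)).1 h1
    calc a = ENNReal.ofReal (1 / K) * (ENNReal.ofReal K * a) := by
          rw [← mul_assoc, ← ENNReal.ofReal_mul (by positivity)]
          have : 1 / K * K = 1 := by field_simp
          rw [this]; simp
      _ ≤ _ := by gcongr
  refine ⟨(by fun_prop : Measurable fun t => Real.exp (-σ * t) * Z t).aestronglyMeasurable, ?_⟩
  have hlim := Lp.eLpNorm_lim_le_liminf_eLpNorm (p := 2) (μ := volume)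
    (f := fun (k : ℕ) => v k) (fun k => (hvm k).aestronglyMeasurable)
    (fun t => Real.exp (-σ * t) * Z t)
    (Filter.Eventually.of_forall fun t => by
      refine tendsto_const_nhds.congr' ?_
      filter_upwards [Filter.eventually_ge_atTop ⌈t⌉₊] with k hk
      simp only [hv]
      rw [Set.indicator_of_mem]
      exact (Nat.le_ceil t).trans (by exact_mod_cast hk))
  refine lt_of_le_of_lt (hlim.trans (Filter.liminf_le_of_frequently_le'
    (Filter.Eventually.frequently (Filter.Eventually.of_forall fun k => hbound k)))) ?_
  exact ENNReal.mul_lt_top ENNReal.ofReal_lt_top hgfin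

/-- If the characteristic function has no zero in the closed right half plane, it is bounded below there,
so `step_lemma` applies with one and the same `ε` on every line `Re s = σ ≥ 0`. Starting from
`energy_start` the weight is moved from `e^{-σt}` down to `e^{εt}` in finitely many steps. -/
theorem energy_decay {τ ξ : ℝ} (hτ : 0 < τ) (hξ : |ξ| < 1) {N : ℝ → ℝ}
    (hN : ContinuousOn N (Set.Icc 0 τ)) (h0 : ∀ s : ℂ, 0 ≤ s.re → charFn τ ξ N s ≠ 0) :
    ∃ C ε : ℝ, 0 ≤ C ∧ 0 < ε ∧ ∀ Z : ℝ → ℝ,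
      Measurable Z → LocallyIntegrable Z → (∀ t < -τ, Z t = 0) →
      (∀ T, MemLp ((Set.Iic T).indicator Z) 2) →
      (∀ t, 0 ≤ t → Z t = ξ * Z (t - τ) + ∫ ν, (Set.Ioc 0 τ).indicator N ν * Z (t - ν)) →
      eLpNorm (fun t => Real.exp (ε * t) * Z t) 2 volume ≤
        ENNReal.ofReal C * eLpNorm ((Set.Ico (-τ) 0).indicator Z) 2 volume := by
  obtain ⟨κ, hκ, hκb⟩ := charFn_lower_bound hτ hξ hN h0
  obtain ⟨Nm, hNm⟩ := isCompact_Icc.exists_bound_of_continuousOn hN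
  have hNm0 : 0 ≤ Nm := (norm_nonneg _).trans (hNm 0 ⟨le_rfl, hτ.le⟩)
  set n := (Set.Ioc 0 τ).indicator N with hn
  have hnm : Measurable n := by
    have := (hN.mono Set.Ioc_subset_Icc_self).measurable_piecewise
      (g := fun _ => (0:ℝ)) continuousOn_const measurableSet_Ioc
    classical
    rw [hn, ← Set.piecewise_eq_indicator]
    exact this
  have hnb : ∀ ν, |n ν| ≤ Nm := by
    intro ν
    by_cases hν : ν ∈ Set.Ioc 0 τ
    · rw [hn, Set.indicator_of_mem hν]; exact hNm ν (Set.Ioc_subset_Icc_self hν)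
    · rw [hn, Set.indicator_of_notMem hν]; simpa using hNm0
  have hn0 : ∀ ν, ν ∉ Set.Ioc 0 τ → n ν = 0 := fun ν hν => by
    rw [hn, Set.indicator_of_notMem hν]
  obtain ⟨σ₀, hσ₀, hstart⟩ := energy_start hτ hξ hNm0
  obtain ⟨ε, hε, hsmall⟩ : ∃ ε : ℝ, 0 < ε ∧
      (Real.exp (ε * τ) - 1) * (|ξ| + Nm * τ) ≤ κ / 2 := by
    have hc : Filter.Tendsto (fun ε : ℝ => (Real.exp (ε * τ) - 1) * (|ξ| + Nm * τ)) (nhds 0)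
        (nhds 0) := by
      have : Continuous (fun ε : ℝ => (Real.exp (ε * τ) - 1) * (|ξ| + Nm * τ)) := by fun_prop
      simpa using this.tendsto 0
    have h1 := (hc.eventually_le_const (show (0:ℝ) < κ / 2 by positivity)).filter_mono
      (nhdsWithin_le_nhds (s := Set.Ioi 0))
    obtain ⟨ε, h2, h3⟩ := (h1.and self_mem_nhdsWithin).exists
    exact ⟨ε, h3, h2⟩
  obtain ⟨K, hK⟩ := exists_nat_ge (σ₀ / ε)
  have hK' : σ₀ ≤ K * ε := by rwa [div_le_iff₀ hε] at hK
  refine ⟨2 / κ * (1 + Nm * τ), ε, by positivity, hε, ?_⟩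
  intro Z hZ hZloc hZ0 hZT heq
  set G := fun t => Z t - ξ * Z (t - τ) - ∫ ν, n ν * Z (t - ν) with hG
  have hG0 : ∀ t, 0 ≤ t → G t = 0 := by
    intro t ht
    simp only [hG]
    have := heq t ht
    linarith
  have hsym : ∀ σ : ℝ, 0 ≤ σ → ∀ x : ℝ, κ ≤ ‖1 - ((ξ * Real.exp (-σ * τ) : ℝ) : ℂ) *
      Complex.exp (-(2 * π * x * τ * I)) -
        𝓕 (fun ν : ℝ => ((n ν * Real.exp (-σ * ν) : ℝ) : ℂ)) x‖ := by
    intro σ hσ x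
    rw [hn, charFn_eq_symbol hτ]
    apply hκb
    simpa using hσ
  obtain ⟨hGneg, hGn⟩ := source_bound (G := G) hτ hnm hnb hn0 hZ hZ0 (fun t => rfl) hG0
  have hYfin : eLpNorm ((Set.Ico (-τ) 0).indicator Z) 2 volume < ⊤ := by
    refine lt_of_le_of_lt (eLpNorm_mono fun t => ?_) (hZT 0).2
    by_cases ht : t ∈ Set.Ico (-τ) 0
    · rw [Set.indicator_of_mem ht, Set.indicator_of_mem (show t ∈ Set.Iic 0 from ht.2.le)]
    · rw [Set.indicator_of_notMem ht]; simp
  have hGfin : eLpNorm G 2 volume < ⊤ :=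
    lt_of_le_of_lt hGn (ENNReal.mul_lt_top ENNReal.ofReal_lt_top hYfin)
  have hgfin : ∀ σ : ℝ, 0 ≤ σ → eLpNorm (fun t => Real.exp (-σ * t) * G t) 2 volume < ⊤ := by
    intro σ hσ
    refine lt_of_le_of_lt (eLpNorm_le_mul_eLpNorm_of_ae_le_mul (c := Real.exp (σ * τ))
      (g := G) (Filter.Eventually.of_forall fun t => ?_) 2)
      (ENNReal.mul_lt_top ENNReal.ofReal_lt_top hGfin)
    rw [norm_mul, Real.norm_of_nonneg (Real.exp_pos _).le]
    by_cases ht : t < -τ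
    · simp [hGneg t ht]
    · exact mul_le_mul_of_nonneg_right (Real.exp_le_exp.2 (by nlinarith [not_lt.1 ht])) (norm_nonneg _)
  have hiter : ∀ k : ℕ, k ≤ K → MemLp (fun t => Real.exp (-((K - k : ℝ) * ε) * t) * Z t) 2 := by
    intro k
    induction k with
    | zero =>
      intro _
      refine hstart _ ?_ n Z G hnm hnb hn0 hZ hZloc hZ0 hZT (fun t => rfl) hG0
      simpa using hK'
    | succ k ih =>
      intro hk
      have hkK : ((k : ℝ) + 1) ≤ K := by exact_mod_cast hk
      have h1 := step_lemma hτ (σ := (K - k : ℝ) * ε) (mul_nonneg (by linarith) hε.le) hε hκ hnm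
        hnb hn0 hZ hZloc hZ0 (fun t => rfl) (hsym _ (mul_nonneg (by linarith) hε.le)) hsmall
        (ih (by omega))
      have e : (K - k : ℝ) * ε - ε = (K - (k + 1 : ℕ) : ℝ) * ε := by push_cast; ring
      rw [e] at h1
      refine ⟨(by fun_prop : Measurable _).aestronglyMeasurable, lt_of_le_of_lt h1 ?_⟩
      refine ENNReal.mul_lt_top ENNReal.ofReal_lt_top (hgfin _ ?_)
      exact mul_nonneg (by push_cast; linarith) hε.le
  have hK0 := hiter K le_rfl
  rw [sub_self, zero_mul] at hK0
  have hfin := step_lemma hτ le_rfl hε hκ hnm hnb hn0 hZ hZloc hZ0 (fun t => rfl)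
    (hsym 0 le_rfl) hsmall hK0
  have e : ∀ t, Real.exp (-(0 - ε) * t) = Real.exp (ε * t) := fun t => by ring_nf
  simp only [e] at hfin
  refine hfin.trans ?_
  rw [ENNReal.ofReal_mul (by positivity), mul_assoc]
  gcongr
  refine le_trans (eLpNorm_mono fun t => ?_) hGn
  rw [norm_mul, Real.norm_of_nonneg (Real.exp_pos _).le]
  by_cases ht : 0 ≤ t
  · change _ * ‖G t‖ ≤ ‖G t‖
    simp [hG0 t ht]
  · exact mul_le_of_le_one_left (norm_nonneg _) (Real.exp_le_one_iff.2 (by nlinarith))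

end

/-! ### Stability and zeros in the closed right half plane -/

section

open scoped ENNReal

/-- No integrability of `g` is assumed: beyond the set of `θ` where `g` is integrable on `[a, θ]` the
interval integral is `0` by convention, and `z` is constant there. -/
theorem measurable_primitive {a b c : ℝ} {g z : ℝ → ℝ}
    (hz : ∀ θ ∈ Set.Icc a b, z θ = c + ∫ s in a..θ, g s) :
    Measurable ((Set.Icc a b).indicator z) := by
  classical
  set J : Set ℝ := {θ | θ ∈ Set.Icc a b ∧ IntervalIntegrable g volume a θ} with hJ
  have hJord : J.OrdConnected := by
    refine ⟨fun x hx y hy w hw => ⟨⟨hx.1.1.trans hw.1, hw.2.trans hy.1.2⟩, ?_⟩⟩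
    refine hy.2.mono_set ?_
    rw [Set.uIcc_of_le (hx.1.1.trans hw.1), Set.uIcc_of_le hy.1.1]
    exact Set.Icc_subset_Icc_right hw.2
  have hJm : MeasurableSet J := hJord.measurableSet
  have hprim : ∀ y ∈ J, ContinuousOn (fun θ => c + ∫ s in a..θ, g s) (Set.Icc a y) := by
    intro y hy
    have hgi := (intervalIntegrable_iff_integrableOn_Icc_of_le hy.1.1).1 hy.2
    rw [← Set.uIcc_of_le hy.1.1] at hgi
    have := intervalIntegral.continuousOn_primitive_interval hgi
    rw [Set.uIcc_of_le hy.1.1] at this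
    exact continuousOn_const.add this
  have hcont : ContinuousOn (fun θ => c + ∫ s in a..θ, g s) J := by
    intro θ hθ
    by_cases h : ∃ y ∈ J, θ < y
    · obtain ⟨y, hy, hlt⟩ := h
      refine ((hprim y hy) θ ⟨hθ.1.1, hlt.le⟩).mono_of_mem_nhdsWithin ?_
      filter_upwards [self_mem_nhdsWithin, nhdsWithin_le_nhds (Iio_mem_nhds hlt)] with x hx hx2
      exact ⟨hx.1.1, (Set.mem_Iio.1 hx2).le⟩
    · push Not at h
      exact ((hprim θ hθ) θ ⟨hθ.1.1, le_rfl⟩).mono fun x hx => ⟨hx.1.1, h x hx⟩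
  have h1 := hcont.measurable_piecewise (g := fun _ => c) continuousOn_const hJm
  have : (Set.Icc a b).indicator z = (Set.Icc a b).indicator
      (J.piecewise (fun θ => c + ∫ s in a..θ, g s) fun _ => c) := by
    ext θ
    by_cases hθ : θ ∈ Set.Icc a b
    · rw [Set.indicator_of_mem hθ, Set.indicator_of_mem hθ, hz θ hθ]
      by_cases hJθ : θ ∈ J
      · rw [Set.piecewise_eq_of_mem _ _ _ hJθ]
      · rw [Set.piecewise_eq_of_notMem _ _ _ hJθ, intervalIntegral.integral_undef, add_zero]
        exact fun h => hJθ ⟨hθ, h⟩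
    · rw [Set.indicator_of_notMem hθ, Set.indicator_of_notMem hθ]
  rw [this]
  exact h1.indicator measurableSet_Icc

/-- Only `|Z|` is assumed locally integrable, not `Z` measurable. The set of `t` for which the
integrand is a.e. strongly measurable is closed, the integral is continuous on it, and it is `0`
off it by convention. -/
theorem measurable_conv_of_abs {τ Nm : ℝ} {N Z : ℝ → ℝ}
    (hN : ContinuousOn N (Set.Icc 0 τ)) (hNm : ∀ x ∈ Set.Icc 0 τ, ‖N x‖ ≤ Nm) (hNm0 : 0 ≤ Nm)
    (hZ : LocallyIntegrable fun t => |Z t|) :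
    Measurable fun t => ∫ ν, (Set.Ioc 0 τ).indicator N ν * Z (t - ν) := by
  classical
  set n := (Set.Ioc 0 τ).indicator N with hn
  have hnb : ∀ ν, |n ν| ≤ Nm := by
    intro ν
    by_cases hν : ν ∈ Set.Ioc 0 τ
    · rw [hn, Set.indicator_of_mem hν]; exact hNm ν (Set.Ioc_subset_Icc_self hν)
    · rw [hn, Set.indicator_of_notMem hν]; simpa using hNm0
  have hncont : ∀ x, x ≠ 0 → x ≠ τ → ContinuousAt n x := by
    intro x h0 h1
    by_cases hx : x ∈ Set.Ioo 0 τ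
    · refine ((hN x (Set.Ioo_subset_Icc_self hx)).continuousAt
        (Icc_mem_nhds hx.1 hx.2)).congr ?_
      filter_upwards [Ioo_mem_nhds hx.1 hx.2] with y hy
      rw [hn, Set.indicator_of_mem (Set.Ioo_subset_Ioc_self hy)]
    · refine (continuousAt_const (y := (0:ℝ))).congr ?_
      have : x ∉ Set.Icc 0 τ := fun h => hx ⟨lt_of_le_of_ne h.1 (Ne.symm h0),
        lt_of_le_of_ne h.2 h1⟩
      filter_upwards [isClosed_Icc.isOpen_compl.mem_nhds this] with y hy
      rw [hn, Set.indicator_of_notMem fun h => hy (Set.Ioc_subset_Icc_self h)]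
  set Φ := fun t => ∫ s, n (t - s) * Z s with hΦ
  have hΦe : (fun t => ∫ ν, n ν * Z (t - ν)) = Φ := by
    ext t
    rw [hΦ]
    have := integral_sub_left_eq_self (fun s => n (t - s) * Z s) volume t
    simp only
    rw [← this]
    simp
  rw [hΦe]
  set B : Set ℝ := {t | AEStronglyMeasurable (fun s => n (t - s) * Z s) volume} with hB
  have hlim : ∀ t, ∀ l : Filter ℝ, l ≤ nhds t →
      ∀ᵐ s, Filter.Tendsto (fun i => n (i - s) * Z s) l (nhds (n (t - s) * Z s)) := by
    intro t l hl
    have hne : ∀ᵐ s : ℝ, s ≠ t ∧ s ≠ t - τ :=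
      (Measure.ae_ne volume t).and (Measure.ae_ne volume (t - τ))
    filter_upwards [hne] with s hs
    refine Filter.Tendsto.mul_const _ ?_
    refine Filter.Tendsto.mono_left ?_ hl
    refine ((hncont (t - s) (fun h => hs.1 (by linarith)) (fun h => hs.2 (by linarith))).tendsto).comp
      ((continuous_id.sub continuous_const).tendsto t)
  have hBclosed : IsClosed B := by
    rw [← isSeqClosed_iff_isClosed]
    intro x t hx ht
    have h1 := hlim t (Filter.map x Filter.atTop) ht
    exact aestronglyMeasurable_of_tendsto_ae Filter.atTop hx
      (h1.mono fun s hs => Filter.tendsto_map'_iff.1 hs)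
  have hcont : ContinuousOn Φ B := by
    intro t ht
    refine tendsto_integral_filter_of_dominated_convergence
      (fun s => Nm * (Set.Icc (t - τ - 1) (t + 1)).indicator (fun s => |Z s|) s) ?_ ?_ ?_
      (hlim t _ nhdsWithin_le_nhds)
    · exact self_mem_nhdsWithin
    · filter_upwards [nhdsWithin_le_nhds (Icc_mem_nhds (sub_one_lt t) (lt_add_one t))] with i hi
      refine Filter.Eventually.of_forall fun s => ?_
      by_cases hs : s ∈ Set.Icc (t - τ - 1) (t + 1)
      · rw [Set.indicator_of_mem hs, norm_mul]
        exact mul_le_mul_of_nonneg_right (hnb _) (norm_nonneg _)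
      · rw [Set.indicator_of_notMem hs, hn, Set.indicator_of_notMem, zero_mul, norm_zero, mul_zero]
        rintro ⟨h1, h2⟩
        exact hs ⟨by linarith [hi.1], by linarith [hi.2]⟩
    · refine Integrable.const_mul ?_ _
      rw [integrable_indicator_iff measurableSet_Icc]
      exact hZ.integrableOn_isCompact isCompact_Icc
  have h1 := hcont.measurable_piecewise (g := fun _ => (0:ℝ)) continuousOn_const
    hBclosed.measurableSet
  convert h1 using 1
  ext t
  by_cases ht : t ∈ B
  · rw [Set.piecewise_eq_of_mem _ _ _ ht]
  · rw [Set.piecewise_eq_of_notMem _ _ _ ht, hΦ]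
    exact integral_undef fun h => ht h.1

/-- A solution of a difference equation with measurable forcing and measurable initial data is
measurable, by induction on intervals of length `τ`. -/
theorem measurable_of_recursion {τ ξ : ℝ} (hτ : 0 < τ) {Z Φ : ℝ → ℝ}
    (h0 : Measurable ((Set.Iio 0).indicator Z)) (hΦ : Measurable Φ)
    (hrec : ∀ t, 0 ≤ t → Z t = ξ * Z (t - τ) + Φ t) : Measurable Z := by
  have hk : ∀ k : ℕ, Measurable ((Set.Iio (k * τ)).indicator Z) := by
    intro k
    induction k with
    | zero => simpa using h0
    | succ k ih =>
      have : (Set.Iio ((k + 1 : ℕ) * τ)).indicator Z = (Set.Iio 0).indicator Z +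
          (Set.Ico 0 ((k + 1 : ℕ) * τ)).indicator
            (fun t => ξ * (Set.Iio (k * τ)).indicator Z (t - τ) + Φ t) := by
        ext t
        by_cases ht : t < 0
        · rw [Pi.add_apply, Set.indicator_of_mem (show t ∈ Set.Iio 0 from ht),
            Set.indicator_of_notMem (show t ∉ Set.Ico 0 ((k + 1 : ℕ) * τ) from
              fun h => absurd h.1 (not_le.2 ht)), add_zero, Set.indicator_of_mem]
          exact ht.trans_le (by positivity)
        · rw [Pi.add_apply, Set.indicator_of_notMem (show t ∉ Set.Iio 0 from ht), zero_add]
          by_cases ht2 : t < (k + 1 : ℕ) * τ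
          · rw [Set.indicator_of_mem (show t ∈ Set.Iio _ from ht2), Set.indicator_of_mem
              (show t ∈ Set.Ico 0 ((k + 1 : ℕ) * τ) from ⟨not_lt.1 ht, ht2⟩),
              Set.indicator_of_mem, hrec t (not_lt.1 ht)]
            push_cast at ht2
            change t - τ < k * τ
            linarith
          · rw [Set.indicator_of_notMem (show t ∉ Set.Iio _ from ht2),
              Set.indicator_of_notMem (fun h => ht2 h.2)]
      rw [this]
      refine h0.add (Measurable.indicator ?_ measurableSet_Ico)
      have := ih.comp (measurable_id.sub_const τ)
      exact (this.const_mul ξ).add hΦ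
  refine measurable_of_tendsto_metrizable hk (tendsto_pi_nhds.2 fun t => ?_)
  refine tendsto_const_nhds.congr' ?_
  obtain ⟨K, hK⟩ := exists_nat_gt (t / τ)
  filter_upwards [Filter.eventually_ge_atTop K] with k hk'
  rw [Set.indicator_of_mem]
  rw [div_lt_iff₀ hτ] at hK
  exact hK.trans_le (by gcongr)

/-- Sufficiency of the spectral condition: a solution, extended by zero to the left of `-τ`, is measurable
and satisfies the hypotheses of `energy_decay`, which gives the exponential `L²` decay. -/
theorem stable_of_no_zeros {τ ξ : ℝ} (hτ : 0 < τ) (hξ : |ξ| < 1) {N : ℝ → ℝ}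
    (hN : ContinuousOn N (Set.Icc 0 τ)) (h0 : ∀ s : ℂ, 0 ≤ s.re → charFn τ ξ N s ≠ 0) :
    ExpStableIDE τ ξ N := by
  obtain ⟨C, ε, hC, hε, hdec⟩ := energy_decay hτ hξ hN h0
  obtain ⟨Nm, hNm⟩ := isCompact_Icc.exists_bound_of_continuousOn hN
  have hNm0 : 0 ≤ Nm := (norm_nonneg _).trans (hNm 0 ⟨le_rfl, hτ.le⟩)
  refine ⟨C * Real.exp (ε * τ), by positivity, ε, hε, ?_⟩
  rintro z ⟨hz2, ⟨g, -, hg⟩, -, hzeq⟩ t ht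
  set Z := (Set.Ici (-τ)).indicator z with hZdef
  have hZz : ∀ s, -τ ≤ s → Z s = z s := fun s hs => Set.indicator_of_mem hs _
  have hZ0 : ∀ s < -τ, Z s = 0 := fun s hs => Set.indicator_of_notMem (fun h => not_le.2 hs h) _
  have hsq : ∀ T, Integrable fun s => ((Set.Iic T).indicator Z s) ^ 2 := by
    intro T
    have h1 : IntegrableOn (fun s => z s ^ 2) (Set.Icc (-τ) (max T (-τ))) :=
      (intervalIntegrable_iff_integrableOn_Icc_of_le (le_max_right _ _)).1 (hz2 _)
    have h2 := (integrable_indicator_iff measurableSet_Icc).2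
      (h1.mono_set (Set.Icc_subset_Icc_right (le_max_left T (-τ))))
    refine h2.congr (Filter.Eventually.of_forall fun s => ?_)
    by_cases hs : s ∈ Set.Icc (-τ) T
    · simp only
      rw [Set.indicator_of_mem hs, Set.indicator_of_mem (show s ∈ Set.Iic T from hs.2), hZz s hs.1]
    · simp only
      rw [Set.indicator_of_notMem hs]
      by_cases hT : s ∈ Set.Iic T
      · rw [Set.indicator_of_mem hT, hZ0 s (by
          by_contra hc
          exact hs ⟨not_lt.1 hc, hT⟩)]; simp
      · rw [Set.indicator_of_notMem hT]; simp
  have habs : ∀ T, MemLp (fun s => |(Set.Iic T).indicator Z s|) 2 := by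
    intro T
    rw [memLp_two_iff_integrable_sq]
    · simpa using hsq T
    · have := Real.continuous_sqrt.comp_aestronglyMeasurable (hsq T).1
      simpa [Real.sqrt_sq_eq_abs] using this
  have habsloc : LocallyIntegrable fun s => |Z s| := by
    rw [locallyIntegrable_iff]
    intro k hk
    obtain ⟨b, hb⟩ := hk.bddAbove
    have h1 : IntegrableOn (fun s => |(Set.Iic b).indicator Z s|) k := by
      have : IsFiniteMeasure (volume.restrict k) := ⟨by
        rw [Measure.restrict_apply_univ]; exact hk.measure_lt_top⟩
      exact ((habs b).restrict k).integrable (by norm_num)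
    refine h1.congr_fun (fun s hs => ?_) hk.measurableSet
    simp only
    rw [Set.indicator_of_mem (show s ∈ Set.Iic b from hb hs)]
  have hconv : ∀ t, 0 ≤ t → ∫ ν in (0:ℝ)..τ, N ν * z (t - ν) =
      ∫ ν, (Set.Ioc 0 τ).indicator N ν * Z (t - ν) := by
    intro t ht
    rw [intervalIntegral.integral_of_le hτ.le, ← integral_indicator measurableSet_Ioc]
    congr 1; ext ν
    by_cases hν : ν ∈ Set.Ioc 0 τ
    · rw [Set.indicator_of_mem hν, Set.indicator_of_mem hν, hZz]
      linarith [hν.2]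
    · rw [Set.indicator_of_notMem hν, Set.indicator_of_notMem hν, zero_mul]
  have hrec : ∀ t, 0 ≤ t → Z t = ξ * Z (t - τ) +
      ∫ ν, (Set.Ioc 0 τ).indicator N ν * Z (t - ν) := by
    intro t ht
    rw [hZz t (by linarith), hZz (t - τ) (by linarith), hzeq t ht, hconv t ht]
  have hZm : Measurable Z := by
    refine measurable_of_recursion hτ ?_ (measurable_conv_of_abs hN hNm hNm0 habsloc) hrec
    have h1 := (measurable_primitive hg).indicator (measurableSet_Iio (a := (0:ℝ)))
    convert h1 using 1
    ext s
    by_cases hs : s < 0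
    · rw [Set.indicator_of_mem (show s ∈ Set.Iio 0 from hs),
        Set.indicator_of_mem (show s ∈ Set.Iio 0 from hs)]
      by_cases hs2 : -τ ≤ s
      · rw [hZz s hs2, Set.indicator_of_mem (show s ∈ Set.Icc (-τ) 0 from ⟨hs2, hs.le⟩)]
      · rw [hZ0 s (not_le.1 hs2), Set.indicator_of_notMem (fun h => hs2 h.1)]
    · rw [Set.indicator_of_notMem (show s ∉ Set.Iio 0 from hs),
        Set.indicator_of_notMem (show s ∉ Set.Iio 0 from hs)]
  have hZT : ∀ T, MemLp ((Set.Iic T).indicator Z) 2 := fun T =>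
    (memLp_two_iff_integrable_sq (hZm.indicator measurableSet_Iic).aestronglyMeasurable).2 (hsq T)
  have hZloc : LocallyIntegrable Z := by
    rw [locallyIntegrable_iff] at habsloc ⊢
    intro k hk
    exact (integrable_norm_iff hZm.aestronglyMeasurable).1 (habsloc k hk)
  have hfin := hdec Z hZm hZloc hZ0 hZT hrec
  have hfin2 := pow_le_pow_left' hfin 2
  rw [mul_pow, eLpNorm_two_sq, eLpNorm_two_sq, ← ENNReal.ofReal_pow hC] at hfin2
  have hY : ∫⁻ s, ‖(Set.Ico (-τ) 0).indicator Z s‖ₑ ^ 2 =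
      ENNReal.ofReal (∫ θ in (-τ)..0, (z θ) ^ 2) := by
    rw [intervalIntegral.integral_of_le (by linarith), integral_Ioc_eq_integral_Ioo,
      ← integral_Ico_eq_integral_Ioo, ofReal_integral_eq_lintegral_ofReal,
      ← lintegral_indicator measurableSet_Ico]
    · congr 1; ext s
      by_cases hs : s ∈ Set.Ico (-τ) 0
      · rw [Set.indicator_of_mem hs, Set.indicator_of_mem hs, hZz s hs.1, ← ofReal_norm,
          ← ENNReal.ofReal_pow (norm_nonneg _), Real.norm_eq_abs, sq_abs]
      · rw [Set.indicator_of_notMem hs, Set.indicator_of_notMem hs]; simp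
    · exact ((intervalIntegrable_iff_integrableOn_Icc_of_le (by linarith)).1 (hz2 0)).mono_set
        Set.Ico_subset_Icc_self
    · exact Filter.Eventually.of_forall fun s => sq_nonneg _
  rw [hY] at hfin2
  set E0 := ∫ θ in (-τ)..0, (z θ) ^ 2 with hE0
  have hE0n : 0 ≤ E0 := intervalIntegral.integral_nonneg (by linarith) fun s _ => sq_nonneg _
  have hL : ENNReal.ofReal (∫ θ in (-τ)..0, (z (t + θ)) ^ 2) ≤
      ENNReal.ofReal (Real.exp (-ε * (t - τ)) ^ 2) * ∫⁻ s, ‖Real.exp (ε * s) * Z s‖ₑ ^ 2 := by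
    have e1 : ∫ θ in (-τ)..0, (z (t + θ)) ^ 2 = ∫ s in (t - τ)..t, (z s) ^ 2 := by
      have := intervalIntegral.integral_comp_add_left (a := -τ) (b := 0) (fun s => (z s) ^ 2) t
      rw [this]; congr 1; ring
    have hint : IntegrableOn (fun s => (z s) ^ 2) (Set.Ioc (t - τ) t) :=
      ((intervalIntegrable_iff_integrableOn_Icc_of_le (by linarith)).1 (hz2 t)).mono_set
        fun s hs => ⟨by linarith [hs.1], hs.2⟩
    rw [e1, intervalIntegral.integral_of_le (by linarith), ofReal_integral_eq_lintegral_ofReal hint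
      (Filter.Eventually.of_forall fun s => sq_nonneg _), ← lintegral_indicator measurableSet_Ioc,
      ← lintegral_const_mul _ (by fun_prop)]
    refine lintegral_mono fun s => ?_
    by_cases hs : s ∈ Set.Ioc (t - τ) t
    · rw [Set.indicator_of_mem hs, ← ofReal_norm, ← ENNReal.ofReal_pow (norm_nonneg _),
        ← ENNReal.ofReal_mul (by positivity), hZz s (by linarith [hs.1])]
      apply ENNReal.ofReal_le_ofReal
      rw [norm_mul, Real.norm_of_nonneg (Real.exp_pos _).le, Real.norm_eq_abs, mul_pow, sq_abs,
        ← mul_assoc, ← mul_pow, ← Real.exp_add]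
      refine le_mul_of_one_le_left (sq_nonneg _) (one_le_pow₀ (Real.one_le_exp ?_))
      nlinarith [hs.1]
    · rw [Set.indicator_of_notMem hs]; exact zero_le
  have hfinal : ∫ θ in (-τ)..0, (z (t + θ)) ^ 2 ≤
      Real.exp (-ε * (t - τ)) ^ 2 * (C ^ 2 * E0) := by
    rw [← ENNReal.ofReal_le_ofReal_iff (by positivity), ENNReal.ofReal_mul (by positivity),
      ENNReal.ofReal_mul (by positivity)]
    exact hL.trans (mul_le_mul_right hfin2 _)
  refine (Real.sqrt_le_sqrt hfinal).trans (le_of_eq ?_)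
  rw [Real.sqrt_mul (by positivity), Real.sqrt_mul (by positivity), Real.sqrt_sq (Real.exp_pos _).le,
    Real.sqrt_sq hC]
  have : Real.exp (-ε * (t - τ)) = Real.exp (ε * τ) * Real.exp (-ε * t) := by
    rw [← Real.exp_add]; ring_nf
  rw [this]; ring

theorem exp_mode_isSolution {τ ξ : ℝ} (hτ : 0 < τ) {N : ℝ → ℝ}
    (hN : ContinuousOn N (Set.Icc 0 τ)) {s : ℂ} (hs : charFn τ ξ N s = 0) :
    IsSolutionIDE τ ξ N fun t => (Complex.exp (s * t)).re := by
  have heq : ∀ t : ℝ, (Complex.exp (s * t)).re = ξ * (Complex.exp (s * (t - τ : ℝ))).re +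
      ∫ ν in (0:ℝ)..τ, N ν * (Complex.exp (s * (t - ν : ℝ))).re := by
    intro t
    have hint : IntervalIntegrable (fun ν : ℝ => (N ν : ℂ) * Complex.exp (s * (t - ν : ℝ)))
        volume 0 τ := by
      apply ContinuousOn.intervalIntegrable
      rw [Set.uIcc_of_le hτ.le]
      exact (Complex.continuous_ofReal.comp_continuousOn hN).mul (by fun_prop)
    have h1 : ∫ ν in (0:ℝ)..τ, N ν * (Complex.exp (s * (t - ν : ℝ))).re =
        (∫ ν in (0:ℝ)..τ, (N ν : ℂ) * Complex.exp (s * (t - ν : ℝ))).re := by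
      have := Complex.reCLM.intervalIntegral_comp_comm hint
      simpa using this
    have h2 : ∫ ν in (0:ℝ)..τ, (N ν : ℂ) * Complex.exp (s * (t - ν : ℝ)) =
        Complex.exp (s * t) * ∫ ν in (0:ℝ)..τ, (N ν : ℂ) * Complex.exp (-s * ν) := by
      rw [← intervalIntegral.integral_const_mul]
      congr 1; ext ν
      rw [mul_left_comm, ← Complex.exp_add]
      congr 2; push_cast; ring
    have h3 : Complex.exp (s * t) = (ξ : ℂ) * Complex.exp (s * (t - τ : ℝ)) +
        Complex.exp (s * t) * ∫ ν in (0:ℝ)..τ, (N ν : ℂ) * Complex.exp (-s * ν) := by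
      have h4 : Complex.exp (s * (t - τ : ℝ)) = Complex.exp (s * t) * Complex.exp (-s * τ) := by
        rw [← Complex.exp_add]; congr 1; push_cast; ring
      have h5 : (1 - (ξ : ℂ) * Complex.exp (-s * τ)
        - ∫ ν in (0:ℝ)..τ, (N ν : ℂ) * Complex.exp (-s * ν)) = 0 := hs
      rw [h4]
      linear_combination Complex.exp (s * t) * h5
    rw [h1, h2]
    conv_lhs => rw [h3]
    rw [Complex.add_re, Complex.re_ofReal_mul]
  refine ⟨fun T => Continuous.intervalIntegrable (by fun_prop) _ _,
    ⟨fun t => (s * Complex.exp (s * t)).re, Continuous.intervalIntegrable (by fun_prop) _ _, ?_⟩,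
    ?_, fun t _ => heq t⟩
  · intro θ hθ
    have hd : ∀ x : ℝ, HasDerivAt (fun t : ℝ => (Complex.exp (s * t)).re)
        (s * Complex.exp (s * x)).re x := by
      intro x
      have h1 : HasDerivAt (fun w : ℂ => Complex.exp (s * w)) (s * Complex.exp (s * x)) (x : ℂ) := by
        have := ((hasDerivAt_id (x : ℂ)).const_mul s).cexp
        simpa [mul_comm] using this
      exact h1.real_of_complex
    rw [intervalIntegral.integral_eq_sub_of_hasDerivAt (fun x _ => hd x)
      (Continuous.intervalIntegrable (by fun_prop) _ _)]
    ring
  · have := heq 0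
    simpa using this

/-- Necessity of the spectral condition: a zero `s` with `Re s ≥ 0` produces the solution `Re e^{st}`,
which does not decay. -/
theorem not_stable_of_zero {τ ξ : ℝ} (hτ : 0 < τ) {N : ℝ → ℝ}
    (hN : ContinuousOn N (Set.Icc 0 τ)) {s : ℂ} (hs : charFn τ ξ N s = 0) (hre : 0 ≤ s.re) :
    ¬ ExpStableIDE τ ξ N := by
  rintro ⟨C, hC, η, hη, hst⟩
  obtain ⟨P, hP, hPs⟩ : ∃ P : ℝ, 0 < P ∧ Complex.exp (s * P) = (Real.exp (s.re * P) : ℝ) := by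
    by_cases him : s.im = 0
    · refine ⟨1, one_pos, ?_⟩
      have : s = (s.re : ℂ) := Complex.ext rfl (by simpa using him)
      rw [this]; push_cast; simp
    · refine ⟨2 * π / |s.im|, by positivity, ?_⟩
      rw [Complex.exp_eq_exp_re_mul_sin_add_cos]
      have h1 : (s * (2 * π / |s.im| : ℝ)).im = s.im * (2 * π / |s.im|) := Complex.im_mul_ofReal _ _
      have h2 : (s * (2 * π / |s.im| : ℝ)).re = s.re * (2 * π / |s.im|) := Complex.re_mul_ofReal _ _
      rw [h1, h2]
      have h3 : s.im * (2 * π / |s.im|) = 2 * π ∨ s.im * (2 * π / |s.im|) = -(2 * π) := by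
        rcases lt_or_gt_of_ne him with h | h
        · right; rw [abs_of_neg h]; field_simp
        · left; rw [abs_of_pos h]; field_simp
      rcases h3 with h | h <;> rw [h] <;> push_cast <;> simp
  set z := fun t : ℝ => (Complex.exp (s * t)).re with hz
  have hper : ∀ (k : ℕ) (θ : ℝ), z (k * P + θ) = Real.exp (s.re * (k * P)) * z θ := by
    intro k θ
    simp only [hz]
    have h1 : Complex.exp (s * (k * P + θ : ℝ)) =
        (Real.exp (s.re * (k * P)) : ℝ) * Complex.exp (s * θ) := by
      have h2 : (Real.exp (s.re * (k * P)) : ℝ) = Real.exp (s.re * P) ^ k := by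
        rw [← Real.exp_nat_mul]; ring_nf
      rw [h2, Complex.ofReal_pow, ← hPs, ← Complex.exp_nat_mul, ← Complex.exp_add]
      congr 1; push_cast; ring
    rw [h1, Complex.re_ofReal_mul]
  set E0 := ∫ θ in (-τ)..0, (z θ) ^ 2 with hE0
  have hE0pos : 0 < E0 := by
    refine intervalIntegral.integral_pos (by linarith) (Continuous.continuousOn (by fun_prop))
      (fun x _ => sq_nonneg _) ⟨0, ⟨by linarith, le_rfl⟩, ?_⟩
    simp [hz]
  have hk : ∀ k : ℕ, 1 ≤ C * Real.exp (-η * (k * P)) := by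
    intro k
    have h1 := hst z (exp_mode_isSolution hτ hN hs) (k * P) (by positivity)
    have h2 : E0 ≤ ∫ θ in (-τ)..0, (z (k * P + θ)) ^ 2 := by
      refine intervalIntegral.integral_mono_on (by linarith)
        (Continuous.intervalIntegrable (by fun_prop) _ _)
        (Continuous.intervalIntegrable (by fun_prop) _ _) fun θ _ => ?_
      rw [hper, mul_pow]
      exact le_mul_of_one_le_left (sq_nonneg _) (one_le_pow₀ (Real.one_le_exp (by positivity)))
    have h3 := (Real.sqrt_le_sqrt h2).trans h1
    exact le_of_mul_le_mul_right (by simpa using h3) (Real.sqrt_pos.2 hE0pos)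
  have hlim : Filter.Tendsto (fun k : ℕ => C * Real.exp (-η * (k * P))) Filter.atTop (nhds 0) := by
    have h1 : Filter.Tendsto (fun k : ℕ => -η * ((k : ℝ) * P)) Filter.atTop Filter.atBot := by
      have := (tendsto_natCast_atTop_atTop (R := ℝ)).atTop_mul_const hP
      exact this.const_mul_atTop_of_neg (by linarith)
    have := (Real.tendsto_exp_atBot.comp h1).const_mul C
    simpa using this
  have := ge_of_tendsto' hlim hk
  linarith

end

/-! ### Following the argument along a half line -/

theorem band_exists {x : ℝ} (h : Real.cos x ≠ 0) : ∃ q : ℤ, |x - q * π| < π / 2 := by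
  refine ⟨round (x / π), ?_⟩
  have h1 := abs_sub_round (x / π)
  have h2 : |x - round (x / π) * π| = |x / π - round (x / π)| * π := by
    rw [← abs_of_pos Real.pi_pos, ← abs_mul, abs_of_pos Real.pi_pos]
    congr 1; field_simp
  rw [h2]
  refine lt_of_le_of_ne (by nlinarith [Real.pi_pos]) fun h3 => h ?_
  rw [← h2] at h3
  have h4 : Real.cos (x - round (x / π) * π) = 0 := by
    rw [← Real.cos_abs, h3, Real.cos_pi_div_two]
  rw [Real.cos_sub_int_mul_pi] at h4
  rcases mul_eq_zero.1 h4 with h5 | h5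
  · exact absurd h5 (zpow_ne_zero _ (by norm_num))
  · exact h5

theorem neg_one_zpow_mul_cos_pos {x : ℝ} {q : ℤ} (h : |x - q * π| < π / 2) :
    0 < (-1 : ℝ) ^ q * Real.cos x := by
  rw [← Real.cos_sub_int_mul_pi]
  rw [abs_lt] at h
  exact Real.cos_pos_of_mem_Ioo ⟨by linarith, h.2⟩

/-- A continuous angle cannot leave the band `|x - qπ| < π/2` without its cosine vanishing. -/
theorem band_stays {Θ : ℝ → ℝ} (hΘ : Continuous Θ) {a b : ℝ} {q : ℤ}
    (hne : ∀ x ∈ Set.uIcc a b, Real.cos (Θ x) ≠ 0) (ha : |Θ a - q * π| < π / 2) :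
    |Θ b - q * π| < π / 2 := by
  by_contra hb
  have hc : ContinuousOn (fun x => |Θ x - q * π|) (Set.uIcc a b) :=
    (by fun_prop : Continuous fun x => |Θ x - q * π|).continuousOn
  obtain ⟨x, hx, hxe⟩ := intermediate_value_uIcc hc
    (Set.Icc_subset_uIcc ⟨ha.le, not_lt.1 hb⟩ : π / 2 ∈ _)
  simp only at hxe
  have h4 : Real.cos (Θ x - q * π) = 0 := by rw [← Real.cos_abs, hxe, Real.cos_pi_div_two]
  rw [Real.cos_sub_int_mul_pi] at h4
  rcases mul_eq_zero.1 h4 with h5 | h5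
  · exact absurd h5 (zpow_ne_zero _ (by norm_num))
  · exact hne x hx h5

/-- Across a zero of order `d`, a nonzero analytic function changes sign by the factor `(-1)^d`. -/
theorem local_sign {M : ℝ → ℝ} (hM : ∀ x, AnalyticAt ℝ M x) {R : ℝ} (hR : M R ≠ 0) {r : ℝ}
    (hr : M r = 0) : 0 < zeroOrder M r ∧ ∃ δ > 0, ∀ x ∈ Set.Ioo (r - δ) r, ∀ y ∈ Set.Ioo r (r + δ),
      0 < (-1 : ℝ) ^ zeroOrder M r * (M x * M y) := by
  have htop : analyticOrderAt M r ≠ ⊤ := by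
    intro h
    rw [analyticOrderAt_eq_top] at h
    have := AnalyticOnNhd.eqOn_zero_of_preconnected_of_eventuallyEq_zero (f := M) (U := Set.univ)
      (fun x _ => hM x) isPreconnected_univ (Set.mem_univ r) h
    exact hR (this (Set.mem_univ R))
  obtain ⟨d, hd⟩ := ENat.ne_top_iff_exists.1 htop
  have hd1 := (analyticOrderAt_eq_nat_iff_iteratedDeriv_eq_zero (hM r) (n := d)).1 hd.symm
  have hzo : zeroOrder M r = d := by
    refine le_antisymm (Nat.sInf_le hd1.2) ?_
    by_contra hlt
    exact (Nat.sInf_mem (s := {k : ℕ | iteratedDeriv k M r ≠ 0}) ⟨d, hd1.2⟩)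
      (hd1.1 _ (not_le.1 hlt))
  obtain ⟨h, hh, hh0, hev⟩ := ((hM r).analyticOrderAt_eq_natCast (n := d)).1 hd.symm
  rw [hzo]
  constructor
  · rcases Nat.eq_zero_or_pos d with h0 | h0
    · subst h0
      have := hev.self_of_nhds
      simp only [pow_zero, one_smul] at this
      exact absurd (this.symm.trans hr) hh0
    · exact h0
  · have hsg : ∀ᶠ z in nhds r, 0 < h z * h r :=
      (hh.continuousAt.mul continuousAt_const).eventually (lt_mem_nhds (mul_self_pos.2 hh0))
    obtain ⟨δ, hδ, hball⟩ := Metric.eventually_nhds_iff.1 (hev.and hsg)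
    refine ⟨δ, hδ, fun x hx y hy => ?_⟩
    have hx' := hball (y := x) (by rw [Real.dist_eq, abs_lt]; constructor <;> linarith [hx.1, hx.2])
    have hy' := hball (y := y) (by rw [Real.dist_eq, abs_lt]; constructor <;> linarith [hy.1, hy.2])
    rw [hx'.1, hy'.1]
    simp only [smul_eq_mul]
    have h1 : 0 < h x * h y := by
      have := mul_pos hx'.2 hy'.2
      have h2 : h x * h r * (h y * h r) = h x * h y * (h r) ^ 2 := by ring
      rw [h2] at this
      exact pos_of_mul_pos_left this (sq_nonneg _)
    have h2 : (-1 : ℝ) ^ d * ((x - r) ^ d * h x * ((y - r) ^ d * h y)) =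
        ((r - x) * (y - r)) ^ d * (h x * h y) := by
      rw [mul_pow, show r - x = (-1) * (x - r) by ring, mul_pow]; ring
    rw [h2]
    have : 0 < (r - x) * (y - r) := mul_pos (by linarith [hx.2]) (by linarith [hy.1])
    positivity

theorem eq_of_neg_one_zpow_eq {a b : ℤ} (h : |(a : ℝ) - b| < 2)
    (hp : (-1 : ℝ) ^ a = (-1 : ℝ) ^ b) : a = b := by
  have h1 : |a - b| < 2 := by exact_mod_cast h
  have h2 : (-1 : ℝ) ^ (a - b) = 1 := by
    rw [zpow_sub₀ (by norm_num), hp, div_self (zpow_ne_zero _ (by norm_num))]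
  rw [abs_lt] at h1
  have : a - b = -1 ∨ a - b = 0 ∨ a - b = 1 := by omega
  rcases this with h | h | h
  · rw [h] at h2; norm_num at h2
  · omega
  · rw [h] at h2; norm_num at h2

/-- Let `Θ` be a continuous argument of `M + iS`, with `|Θ| < π/2` at a point beyond all zeros of `M`.
Between zeros of `M` the angle stays in a band `|Θ - cπ| < π/2` with `c` an integer. Descending
through a zero of even order it returns to the same band; through a zero of odd order it moves to
the neighbouring band on the side told by the sign of `S` and the parity of `c`. Hence the index
of the band below the first `k` zeros is the partial alternating sum of signs, and at `0`, where
`S = 0`, the angle is the centre of its band. -/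
theorem crossing {M S Θ r : ℝ → ℝ} {R : ℝ} (hM : ∀ x, AnalyticAt ℝ M x)
    (hΘ : Continuous Θ) (hr : ∀ x, 0 < r x) (hMr : ∀ x, M x = r x * Real.cos (Θ x))
    (hSr : ∀ x, S x = r x * Real.sin (Θ x)) (hpos : ∀ x, R ≤ x → 0 < M x)
    (hstart : |Θ R| < π / 2) (hS0 : S 0 = 0) {m : ℕ} {ρ : Fin m → ℝ} (hρdec : Antitone ρ)
    (hρzero : ∀ j : Fin m, 0 < ρ j ∧ M (ρ j) = 0)
    (hρmult : ∀ r : ℝ, 0 < r → M r = 0 →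
      ({j : Fin m | ρ j = r} : Set (Fin m)).ncard = zeroOrder M r) :
    Θ 0 = π * ∑ j : Fin m, (-1 : ℝ) ^ (j : ℕ) * Real.sign (S (ρ j)) := by
  have hcos : ∀ x, M x ≠ 0 → Real.cos (Θ x) ≠ 0 := fun x hx h => hx (by rw [hMr, h, mul_zero])
  have hcos' : ∀ x, M x = 0 → Real.cos (Θ x) = 0 := fun x hx => by
    rw [hMr] at hx; exact (mul_eq_zero.1 hx).resolve_left (hr x).ne'
  have hRne : M R ≠ 0 := (hpos R le_rfl).ne.symm
  -- every positive zero is listed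
  have hlist : ∀ x, 0 < x → M x = 0 → ∃ j, ρ j = x := by
    intro x hx h0
    have h1 := hρmult x hx h0
    have h2 := (local_sign hM hRne h0).1
    rw [← h1] at h2
    exact Set.nonempty_of_ncard_ne_zero h2.ne'
  have hSne : ∀ x, M x = 0 → S x ≠ 0 := by
    intro x hx h
    have h1 := hcos' x hx
    rw [hSr] at h
    have h2 := (mul_eq_zero.1 h).resolve_left (hr x).ne'
    have := Real.sin_sq_add_cos_sq (Θ x)
    rw [h1, h2] at this; norm_num at this
  set sg : ℝ → ℤ := fun x => if 0 < S x then 1 else -1 with hsg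
  have hsgS : ∀ x, S x ≠ 0 → Real.sign (S x) = (sg x : ℝ) := by
    intro x hx
    simp only [hsg]
    rcases lt_or_gt_of_ne hx with h | h
    · rw [Real.sign_of_neg h, if_neg (not_lt.2 h.le)]; norm_num
    · rw [Real.sign_of_pos h, if_pos h]; norm_num
  set σ : ℕ → ℤ := fun j => if h : j < m then sg (ρ ⟨j, h⟩) else 1 with hσ
  have hσodd : ∀ j, σ j = 1 ∨ σ j = -1 := by
    intro j
    simp only [hσ, hsg]
    split_ifs <;> simp
  set c : ℕ → ℤ := fun k => ∑ j ∈ Finset.range k, (-1) ^ j * σ j with hc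
  have hcpar : ∀ k, (-1 : ℝ) ^ (c k) = (-1 : ℝ) ^ k := by
    intro k
    induction k with
    | zero => simp [hc]
    | succ k ih =>
      have : c (k + 1) = c k + (-1) ^ k * σ k := by simp only [hc]; rw [Finset.sum_range_succ]
      rw [this, zpow_add₀ (by norm_num), ih, pow_succ]
      congr 1
      rcases neg_one_pow_eq_or ℤ k with h | h <;> rcases hσodd k with h' | h' <;>
        rw [h, h'] <;> norm_num
  -- `c k` is the index of the band in which `Θ` lies just below the `k` largest zeros of `M`
  have key : ∀ k : ℕ, ∀ ω, 0 ≤ ω → M ω ≠ 0 → k ≤ m → (∀ j : Fin m, ω < ρ j ↔ (j : ℕ) < k) →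
      |Θ ω - c k * π| < π / 2 := by
    intro k
    induction k using Nat.strong_induction_on with
    | _ k ih =>
      intro ω hω hMω hkm hk
      rcases Nat.eq_zero_or_pos k with h0 | hkpos
      · subst h0
        have hno : ∀ x, ω ≤ x → M x ≠ 0 := by
          intro x hx hMx
          rcases hx.eq_or_lt with h | h
          · exact hMω (h ▸ hMx)
          · obtain ⟨j, hj⟩ := hlist x (by linarith) hMx
            have := (hk j).1 (by rw [hj]; exact h)
            omega
        have hstart' : |Θ R - (0 : ℤ) * π| < π / 2 := by simpa using hstart
        have := band_stays hΘ (b := ω) (a := R) ?_ hstart'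
        · simpa [hc] using this
        · intro x hx
          apply hcos
          rcases le_total R ω with h | h
          · rw [Set.uIcc_of_le h] at hx
            exact (hpos x hx.1).ne'
          · rw [Set.uIcc_of_ge h] at hx
            exact hno x hx.1
      · -- the smallest zero above `ω`
        set jl : Fin m := ⟨k - 1, by omega⟩ with hjl
        set p := ρ jl with hp
        have hωp : ω < p := (hk jl).2 (by simp only [hjl]; omega)
        have hp0 : 0 < p := (hρzero jl).1
        have hMp : M p = 0 := (hρzero jl).2
        -- first index at which `p` occurs
        have hex : ∃ i : ℕ, ∃ h : i < m, ρ ⟨i, h⟩ = p := ⟨k - 1, by omega, rfl⟩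
        classical
        set k' := Nat.find hex with hk'
        obtain ⟨hk'm, hk'p⟩ := Nat.find_spec hex
        have hk'le : k' ≤ k - 1 := Nat.find_min' hex ⟨by omega, rfl⟩
        have hseteq : ∀ j : Fin m, ρ j = p ↔ k' ≤ (j : ℕ) ∧ (j : ℕ) < k := by
          intro j
          constructor
          · intro hj
            exact ⟨Nat.find_min' hex ⟨j.2, hj⟩, (hk j).1 (by rw [hj]; exact hωp)⟩
          · rintro ⟨h1, h2⟩
            apply le_antisymm
            · rw [← hk'p]; exact hρdec h1
            · exact hρdec (show (j : ℕ) ≤ k - 1 by omega)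
        have hgt : ∀ j : Fin m, p < ρ j ↔ (j : ℕ) < k' := by
          intro j
          constructor
          · intro h
            by_contra hc
            have : ρ j ≤ p := by rw [← hk'p]; exact hρdec (not_lt.1 hc)
            linarith
          · intro h
            have h1 : p ≤ ρ j := hρdec (show (j : ℕ) ≤ k - 1 by omega)
            refine lt_of_le_of_ne h1 fun h2 => ?_
            have := ((hseteq j).1 h2.symm).1
            omega
        set d := zeroOrder M p with hd
        have hdk : d = k - k' := by
          rw [hd, ← hρmult p hp0 hMp]
          have : ({j : Fin m | ρ j = p} : Set (Fin m)) =
              (fun j : Fin m => (j : ℕ)) ⁻¹' (Set.Ico k' k) := by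
            ext j; simp [hseteq]
          rw [this, Set.ncard_preimage_of_injective_subset_range Fin.val_injective,
            ← Finset.coe_Ico, Set.ncard_coe_finset, Nat.card_Ico]
          intro i hi
          exact ⟨⟨i, by have := hi.2; omega⟩, rfl⟩
        obtain ⟨hdpos, δ, hδ, hsign⟩ := local_sign hM hRne hMp
        rw [← hd] at hsign hdpos
        -- no zeros in `(ω, p)`
        have hgap : ∀ x, ω ≤ x → x < p → M x ≠ 0 := by
          intro x hx hxp hMx
          rcases hx.eq_or_lt with h | h
          · exact hMω (h ▸ hMx)
          · obtain ⟨j, hj⟩ := hlist x (by linarith) hMx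
            have h1 := (hk j).1 (by rw [hj]; exact h)
            have h2 : p ≤ ρ j := hρdec (show (j : ℕ) ≤ k - 1 by omega)
            linarith
        -- nonvanishing on the punctured neighbourhood
        have hrt : ∀ y ∈ Set.Ioo p (p + δ), M y ≠ 0 := by
          intro y hy h
          have := hsign (p - δ / 2) ⟨by linarith, by linarith⟩ y hy
          rw [h] at this; simp at this
        have hright : ∀ y ∈ Set.Ioo p (p + δ), |Θ y - c k' * π| < π / 2 := by
          intro y hy
          refine ih k' (by omega) y (by linarith [hy.1]) (hrt y hy) (by omega) fun j => ?_
          rw [← hgt j]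
          constructor
          · intro h; linarith [hy.1]
          · intro h
            by_contra hc
            refine hrt (ρ j) ⟨h, by linarith [hy.2]⟩ (hρzero j).2
        obtain ⟨q, hq⟩ := band_exists (hcos ω hMω)
        have hleft : ∀ x, ω ≤ x → x < p → |Θ x - q * π| < π / 2 := by
          intro x hx hxp
          refine band_stays hΘ (a := ω) ?_ hq
          intro w hw
          rw [Set.uIcc_of_le hx] at hw
          exact hcos w (hgap w hw.1 (by linarith [hw.2]))
        have hlimR : |Θ p - c k' * π| ≤ π / 2 := by
          have hcl : p ∈ closure (Set.Ioo p (p + δ)) := by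
            rw [closure_Ioo (by linarith)]; exact ⟨le_rfl, by linarith⟩
          have hcf : Continuous fun x => |Θ x - c k' * π| := by fun_prop
          exact closure_minimal (fun y hy => (hright y hy).le)
            (isClosed_le hcf continuous_const) hcl
        have hlimL : |Θ p - q * π| ≤ π / 2 := by
          have hcl : p ∈ closure (Set.Ioo ω p) := by
            rw [closure_Ioo hωp.ne]; exact ⟨hωp.le, le_rfl⟩
          have hcf : Continuous fun x => |Θ x - q * π| := by fun_prop
          exact closure_minimal (fun y hy => (hleft y hy.1.le hy.2).le)
            (isClosed_le hcf continuous_const) hcl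
        -- `Θ p` is an edge of the band
        have hedge : Θ p - c k' * π = π / 2 ∨ Θ p - c k' * π = -(π / 2) := by
          have h1 : Real.cos (Θ p - c k' * π) = 0 := by
            rw [Real.cos_sub_int_mul_pi, hcos' p hMp, mul_zero]
          rw [abs_le] at hlimR
          by_contra hcon
          push Not at hcon
          have := Real.cos_pos_of_mem_Ioo (x := Θ p - c k' * π)
            ⟨lt_of_le_of_ne hlimR.1 (Ne.symm hcon.2), lt_of_le_of_ne hlimR.2 hcon.1⟩
          linarith
        have hpi := Real.pi_pos
        -- the sign of `M` on either side of `p` fixes the parity of the new band index `q`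
        have hpar : (-1 : ℝ) ^ q = (-1 : ℝ) ^ d * (-1 : ℝ) ^ (c k') := by
          set x := max ω (p - δ / 2) with hx
          have hx1 : x < p := max_lt hωp (by linarith)
          have hx2 : p - δ < x := lt_of_lt_of_le (by linarith) (le_max_right _ _)
          have hs := hsign x ⟨hx2, hx1⟩ (p + δ / 2) ⟨by linarith, by linarith⟩
          have h1 := neg_one_zpow_mul_cos_pos (hleft x (le_max_left _ _) hx1)
          have h2 := neg_one_zpow_mul_cos_pos (hright (p + δ / 2) ⟨by linarith, by linarith⟩)
          rw [hMr x, hMr (p + δ / 2)] at hs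
          have hs' : 0 < (-1 : ℝ) ^ d * (Real.cos (Θ x) * Real.cos (Θ (p + δ / 2))) := by
            have h3 := mul_pos (hr x) (hr (p + δ / 2))
            have h4 : (-1 : ℝ) ^ d * (r x * Real.cos (Θ x) *
              (r (p + δ / 2) * Real.cos (Θ (p + δ / 2)))) =
              ((-1 : ℝ) ^ d * (Real.cos (Θ x) * Real.cos (Θ (p + δ / 2)))) *
                (r x * r (p + δ / 2)) := by ring
            rw [h4] at hs
            exact pos_of_mul_pos_left hs h3.le
          have e : ∀ n : ℤ, (-1 : ℝ) ^ n = 1 ∨ (-1 : ℝ) ^ n = -1 := by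
            intro n
            rcases Int.even_or_odd n with h | h
            · left; exact h.neg_one_zpow
            · right; exact h.neg_one_zpow
          rcases e q with h3 | h3 <;> rcases e (c k') with h4 | h4 <;>
            rcases neg_one_pow_eq_or ℝ d with h5 | h5 <;>
            rw [h3] at h1 ⊢ <;> rw [h4] at h2 ⊢ <;> rw [h5] at hs' ⊢ <;>
            first
            | (norm_num; done)
            | (exfalso; nlinarith)
        -- the terms with `ρ j = p` cancel in pairs
        have hsum : c k = c k' + (-1) ^ k' * sg p * (if Even d then 0 else 1) := by
          have hkk : k = k' + d := by omega
          simp only [hc]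
          conv_lhs => rw [hkk]
          rw [Finset.sum_range_add]
          congr 1
          have : ∀ i ∈ Finset.range d, (-1 : ℤ) ^ (k' + i) * σ (k' + i) =
              ((-1) ^ k' * sg p) * (-1) ^ i := by
            intro i hi
            have hi' := Finset.mem_range.1 hi
            have him : k' + i < m := by omega
            have : σ (k' + i) = sg p := by
              simp only [hσ, dif_pos him]
              congr 1
              exact (hseteq ⟨k' + i, him⟩).2 ⟨by simp, by simp; omega⟩
            rw [this, pow_add]; ring
          rw [Finset.sum_congr rfl this, ← Finset.mul_sum, neg_one_geom_sum]
        suffices hqc : q = c k by rw [← hqc]; exact hq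
        by_cases hev : Even d
        · rw [if_pos hev, mul_zero, add_zero] at hsum
          rw [hsum]
          refine eq_of_neg_one_zpow_eq ?_ (by rw [hpar, hev.neg_one_pow, one_mul])
          rw [abs_le] at hlimL hlimR
          rw [abs_lt]
          constructor <;> nlinarith
        · rw [if_neg hev, mul_one] at hsum
          have hod : Odd d := Nat.not_even_iff_odd.1 hev
          rw [hod.neg_one_pow] at hpar
          -- `S p` has the sign of `(-1)^{k'}` at the upper edge and the opposite sign at the lower one
          have hsin : 0 < S p * ((-1 : ℝ) ^ k') ∧ Θ p - c k' * π = π / 2 ∨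
              S p * ((-1 : ℝ) ^ k') < 0 ∧ Θ p - c k' * π = -(π / 2) := by
            have h1 := Real.sin_sub_int_mul_pi (Θ p) (c k')
            rw [hcpar] at h1
            rcases hedge with h | h
            · left
              rw [h, Real.sin_pi_div_two] at h1
              refine ⟨?_, h⟩
              rw [hSr, mul_assoc, mul_comm (Real.sin _), ← h1, mul_one]; exact hr p
            · right
              rw [h, Real.sin_neg, Real.sin_pi_div_two] at h1
              refine ⟨?_, h⟩
              rw [hSr, mul_assoc, mul_comm (Real.sin _), ← h1]; linarith [hr p]
          have hstep : ((-1 : ℤ) ^ k' * sg p = 1 ∧ Θ p - c k' * π = π / 2) ∨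
              ((-1 : ℤ) ^ k' * sg p = -1 ∧ Θ p - c k' * π = -(π / 2)) := by
            rcases hsin with ⟨h1, h2⟩ | ⟨h1, h2⟩
            · left; refine ⟨?_, h2⟩
              rcases Nat.even_or_odd k' with h | h
              · rw [h.neg_one_pow] at h1 ⊢
                simp only [hsg]; rw [if_pos (by linarith)]; norm_num
              · rw [h.neg_one_pow] at h1 ⊢
                simp only [hsg]; rw [if_neg (by linarith)]; norm_num
            · right; refine ⟨?_, h2⟩
              rcases Nat.even_or_odd k' with h | h
              · rw [h.neg_one_pow] at h1 ⊢
                simp only [hsg]; rw [if_neg (by linarith)]; norm_num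
              · rw [h.neg_one_pow] at h1 ⊢
                simp only [hsg]; rw [if_pos (by linarith)]; norm_num
          rw [abs_le] at hlimL
          have hne : (-1 : ℝ) ^ (c k') * (-1 : ℝ) = (-1 : ℝ) ^ q := by rw [hpar]; ring
          refine eq_of_neg_one_zpow_eq ?_ ?_
          · rw [hsum]
            rw [abs_lt]
            rcases hstep with ⟨h1, h2⟩ | ⟨h1, h2⟩ <;> rw [h1] <;> push_cast <;>
              constructor <;> nlinarith
          · rw [hsum]
            rcases hstep with ⟨h1, h2⟩ | ⟨h1, h2⟩ <;> rw [h1, zpow_add₀ (by norm_num), hpar] <;>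
              norm_num
  have hM0 : M 0 ≠ 0 := fun h => hSne 0 h hS0
  have h1 := key m 0 le_rfl hM0 le_rfl fun j => ⟨fun _ => j.2, fun _ => (hρzero j).1⟩
  have h2 : Real.sin (Θ 0) = 0 := by
    rw [hSr] at hS0; exact (mul_eq_zero.1 hS0).resolve_left (hr 0).ne'
  obtain ⟨n, hn⟩ := Real.sin_eq_zero_iff.1 h2
  have h3 : n = c m := by
    rw [← hn, ← sub_mul, abs_mul, abs_of_pos Real.pi_pos] at h1
    have h4 : |(n : ℝ) - c m| < 1 := by nlinarith [Real.pi_pos]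
    have h5 : |n - c m| < 1 := by exact_mod_cast h4
    rw [Int.abs_lt_one_iff] at h5
    omega
  rw [← hn, h3, mul_comm]
  congr 1
  simp only [hc]
  push_cast
  rw [← Fin.sum_univ_eq_sum_range (fun j => (-1 : ℝ) ^ j * (σ j : ℝ))]
  refine Finset.sum_congr rfl fun j _ => ?_
  rw [hsgS _ (hSne _ (hρzero j).2)]
  simp [hσ]

/-! ### Winding around the half disc -/

/-- `θ` is an argument (not necessarily principal) of the complex number `z`. -/
def IsAngle (z : ℂ) (θ : ℝ) : Prop := z = ‖z‖ * Complex.exp (θ * I)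

theorem IsAngle.mul {z w : ℂ} {θ φ : ℝ} (hz : IsAngle z θ) (hw : IsAngle w φ) :
    IsAngle (z * w) (θ + φ) := by
  unfold IsAngle at *
  rw [norm_mul]
  push_cast
  rw [add_mul, Complex.exp_add]
  calc z * w = (‖z‖ * Complex.exp (θ * I)) * (‖w‖ * Complex.exp (φ * I)) := by rw [← hz, ← hw]
    _ = _ := by ring

theorem isAngle_arg (z : ℂ) : IsAngle z z.arg := (Complex.norm_mul_exp_arg_mul_I z).symm

theorem isAngle_of_pos_mul {z : ℂ} {r θ : ℝ} (hr : 0 < r) (h : z = r * Complex.exp (θ * I)) :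
    IsAngle z θ := by
  unfold IsAngle
  have : ‖z‖ = r := by
    rw [h, norm_mul, Complex.norm_exp_ofReal_mul_I, mul_one, Complex.norm_of_nonneg hr.le]
  rw [this, h]

theorem isAngle_exp (z : ℂ) : IsAngle (Complex.exp z) z.im := by
  refine isAngle_of_pos_mul (Real.exp_pos z.re) ?_
  rw [Complex.ofReal_exp, ← Complex.exp_add, Complex.re_add_im]

theorem IsAngle.sub_eq {z : ℂ} {θ φ : ℝ} (hz : z ≠ 0) (h₁ : IsAngle z θ) (h₂ : IsAngle z φ) :
    ∃ k : ℤ, θ = φ + k * (2 * π) := by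
  unfold IsAngle at *
  have hn : (‖z‖ : ℂ) ≠ 0 := by simpa using hz
  have he : Complex.exp (θ * I) = Complex.exp (φ * I) := mul_left_cancel₀ hn (h₁.symm.trans h₂)
  obtain ⟨k, hk⟩ := Complex.exp_eq_exp_iff_exists_int.1 he
  refine ⟨k, ?_⟩
  have := congrArg Complex.im hk
  simpa using this

theorem IsAngle.eq_of_abs_lt {z : ℂ} {θ φ : ℝ} (hz : z ≠ 0) (h₁ : IsAngle z θ)
    (h₂ : IsAngle z φ) (h : |θ - φ| < 2 * π) : θ = φ := by
  obtain ⟨k, hk⟩ := h₁.sub_eq hz h₂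
  have h1 : θ - φ = k * (2 * π) := by linarith
  rw [h1, abs_mul, abs_of_pos Real.two_pi_pos] at h
  have h2 : |(k : ℝ)| < 1 := by
    by_contra hc
    nlinarith [Real.two_pi_pos]
  have h3 : k = 0 := by
    rw [← Int.cast_abs] at h2
    exact Int.abs_lt_one_iff.1 (by exact_mod_cast h2)
  simpa [h3] using hk

theorem isAngle_add_two_pi {z : ℂ} {θ : ℝ} (h : IsAngle z θ) (k : ℤ) :
    IsAngle z (θ + k * (2 * π)) := by
  unfold IsAngle at *
  have : Complex.exp ((θ + k * (2 * π) : ℝ) * I) = Complex.exp (θ * I) :=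
    Complex.exp_eq_exp_iff_exists_int.2 ⟨k, by push_cast; ring⟩
  rw [this]; exact h

/-- `f` winds `n` times around `0` along the boundary of the half disc of radius `R` in the right
half plane: there is a continuous argument `θ` of `f` along the whole imaginary axis, and a
continuous argument `φ` along the semicircle `t ↦ R e^{it}`, `|t| ≤ π/2`; they agree at `iR`
and differ by `2πn` at `-iR`. -/
def HasWinding (R : ℝ) (f : ℂ → ℂ) (n : ℕ) : Prop :=
  ∃ θ φ : ℝ → ℝ, Continuous θ ∧ Continuous φ ∧ (∀ ω : ℝ, IsAngle (f (I * ω)) (θ ω)) ∧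
    (∀ t ∈ Set.Icc (-(π / 2)) (π / 2), IsAngle (f (R * Complex.exp (t * I))) (φ t)) ∧
    φ (π / 2) = θ R ∧ φ (-(π / 2)) = θ (-R) - n * (2 * π)

theorem HasWinding.mul {R : ℝ} {f g : ℂ → ℂ} {n m : ℕ} (hf : HasWinding R f n)
    (hg : HasWinding R g m) : HasWinding R (fun s => f s * g s) (n + m) := by
  obtain ⟨θ, φ, h1, h2, h3, h4, h5, h6⟩ := hf
  obtain ⟨θ', φ', h1', h2', h3', h4', h5', h6'⟩ := hg
  refine ⟨fun x => θ x + θ' x, fun x => φ x + φ' x, h1.add h1', h2.add h2',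
    fun ω => (h3 ω).mul (h3' ω), fun t ht => (h4 t ht).mul (h4' t ht), ?_, ?_⟩
  · simp only [h5, h5']
  · simp only [h6, h6']; push_cast; ring

theorem cexp_pi_half : Complex.exp (((π / 2 : ℝ) : ℂ) * I) = I := by
  push_cast; exact Complex.exp_pi_div_two_mul_I

theorem cexp_neg_pi_half : Complex.exp (((-(π / 2) : ℝ) : ℂ) * I) = -I := by
  rw [Complex.ofReal_neg, neg_mul, Complex.exp_neg, cexp_pi_half, Complex.inv_I]

/-- A function without zeros in the closed right half plane has a continuous logarithm there
(extend it to the plane by retracting onto the half plane), hence does not wind. -/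
theorem hasWinding_zero_of_ne {R : ℝ} (hR : 0 < R) {f : ℂ → ℂ} (hf : Continuous f)
    (h0 : ∀ s : ℂ, 0 ≤ s.re → f s ≠ 0) : HasWinding R f 0 := by
  set g : ℂ → ℂ := fun s => f ((max s.re 0 : ℝ) + s.im * I) with hg
  have hgc : Continuous g := by
    refine hf.comp ?_
    refine Continuous.add ?_ ?_
    · exact Complex.continuous_ofReal.comp (Complex.continuous_re.max continuous_const)
    · exact (Complex.continuous_ofReal.comp Complex.continuous_im).mul continuous_const
  have hgf : ∀ s : ℂ, 0 ≤ s.re → g s = f s := by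
    intro s hs
    simp only [hg, max_eq_left hs, Complex.re_add_im]
  have hsc : IsSimplyConnected (Set.univ : Set ℂ) := by
    unfold IsSimplyConnected
    have : ContractibleSpace (Set.univ : Set ℂ) :=
      (Homeomorph.Set.univ ℂ).contractibleSpace
    infer_instance
  obtain ⟨l, hl, hexp⟩ := Complex.exists_continuousOn_eqOn_exp_comp hsc isOpen_univ
    hgc.continuousOn (by
      rintro ⟨s, -, hs⟩
      exact h0 _ (by simp) hs)
  have hl' : Continuous l := by simpa [continuousOn_univ] using hl
  have hexp' : ∀ s : ℂ, 0 ≤ s.re → f s = Complex.exp (l s) := fun s hs =>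
    (hgf s hs).symm.trans (hexp (Set.mem_univ s)).symm
  refine ⟨fun ω => (l (I * ω)).im, fun t => (l (R * Complex.exp (t * I))).im, by fun_prop,
    by fun_prop, fun ω => ?_, fun t ht => ?_, ?_, ?_⟩
  · rw [hexp' _ (by simp)]; exact isAngle_exp _
  · rw [hexp' _ ?_]
    · exact isAngle_exp _
    · rw [Complex.re_ofReal_mul, Complex.exp_ofReal_mul_I_re]
      exact mul_nonneg hR.le (Real.cos_nonneg_of_mem_Icc ht)
  · simp only [cexp_pi_half]; rw [mul_comm]
  · simp only [cexp_neg_pi_half]; push_cast; simp [mul_comm]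

/-- A linear factor `s - a` with `a` inside the half disc winds exactly once. -/
theorem hasWinding_linear {R : ℝ} {a : ℂ} (ha : 0 < a.re) (haR : ‖a‖ < R) :
    HasWinding R (fun s => s - a) 1 := by
  have hR : 0 < R := lt_of_le_of_lt (norm_nonneg _) haR
  have hpi := Real.pi_pos
  set u : ℝ → ℂ := fun t => 1 - a * Complex.exp (-t * I) / R with hu
  have huc : Continuous u := by fun_prop
  have hre : ∀ t, 0 < (u t).re := by
    intro t
    have h1 : ‖a * Complex.exp (-t * I) / R‖ < 1 := by
      rw [norm_div, norm_mul, ← Complex.ofReal_neg, Complex.norm_exp_ofReal_mul_I, mul_one,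
        Complex.norm_of_nonneg hR.le, div_lt_one hR]
      exact haR
    have h2 := (Complex.re_le_norm (a * Complex.exp (-t * I) / R)).trans_lt h1
    simp only [hu, Complex.sub_re, Complex.one_re]
    linarith
  have hargu : ∀ t, |(u t).arg| < π / 2 := fun t =>
    Complex.abs_arg_lt_pi_div_two_iff.2 (Or.inl (hre t))
  have hθ : ∀ ω : ℝ, IsAngle (I * ω - a) (π - Real.arctan ((ω - a.im) / a.re)) := by
    intro ω
    set x := (ω - a.im) / a.re with hx
    have hs : 0 < √(1 + x ^ 2) := Real.sqrt_pos.2 (by positivity)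
    refine isAngle_of_pos_mul (r := a.re * √(1 + x ^ 2)) (by positivity) ?_
    have hx' : a.re * x = ω - a.im := by rw [hx]; field_simp
    apply Complex.ext
    · rw [Complex.re_ofReal_mul, Complex.exp_ofReal_mul_I_re, Real.cos_pi_sub, Real.cos_arctan]
      simp; field_simp
    · rw [Complex.im_ofReal_mul, Complex.exp_ofReal_mul_I_im, Real.sin_pi_sub, Real.sin_arctan]
      simp; field_simp; linarith
  have hφ : ∀ t : ℝ, IsAngle (R * Complex.exp (t * I) - a) (t + (u t).arg) := by
    intro t
    have h1 : (R : ℂ) * Complex.exp (t * I) - a = (R * Complex.exp (t * I)) * u t := by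
      have h2 : Complex.exp (t * I) * Complex.exp (-t * I) = 1 := by
        rw [← Complex.exp_add]; simp
      have h3 : (R : ℂ) ≠ 0 := by exact_mod_cast hR.ne'
      simp only [hu]
      have : (R : ℂ) * Complex.exp (t * I) * (1 - a * Complex.exp (-t * I) / R) =
        R * Complex.exp (t * I) - a * (Complex.exp (t * I) * Complex.exp (-t * I)) := by
        field_simp
      rw [this, h2, mul_one]
    rw [h1]
    exact (isAngle_of_pos_mul hR rfl).mul (isAngle_arg _)
  have hne : ∀ ω : ℝ, I * ω - a ≠ 0 := by
    intro ω h
    have := congrArg Complex.re h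
    simp at this; linarith
  refine ⟨fun ω => π - Real.arctan ((ω - a.im) / a.re), fun t => t + (u t).arg, by fun_prop, ?_,
    hθ, fun t _ => hφ t, ?_, ?_⟩
  · refine continuous_id.add (continuous_iff_continuousAt.2 fun t => ?_)
    exact (Complex.continuousAt_arg (Or.inl (hre t))).comp huc.continuousAt
  · have h1 := hφ (π / 2)
    rw [cexp_pi_half, mul_comm] at h1
    refine h1.eq_of_abs_lt (hne R) (hθ R) ?_
    have h2 := abs_lt.1 (hargu (π / 2))
    have h3 := Real.arctan_lt_pi_div_two ((R - a.im) / a.re)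
    have h4 := Real.neg_pi_div_two_lt_arctan ((R - a.im) / a.re)
    rw [abs_lt]; constructor <;> linarith
  · have h1 := hφ (-(π / 2))
    rw [cexp_neg_pi_half, mul_neg, mul_comm, ← mul_neg, ← Complex.ofReal_neg] at h1
    have h5 := isAngle_add_two_pi (hθ (-R)) (-1)
    have h6 := h1.eq_of_abs_lt (hne (-R)) h5 ?_
    · refine h6.trans ?_
      push_cast; ring
    have h2 := abs_lt.1 (hargu (-(π / 2)))
    have h3 := Real.arctan_lt_pi_div_two ((-R - a.im) / a.re)
    have h4 := Real.neg_pi_div_two_lt_arctan ((-R - a.im) / a.re)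
    push_cast
    rw [abs_lt]; constructor <;> linarith

theorem hasWinding_linear_pow {R : ℝ} {a : ℂ} (ha : 0 < a.re) (haR : ‖a‖ < R) (k : ℕ) :
    HasWinding R (fun s => (s - a) ^ k) k := by
  induction k with
  | zero =>
    simpa using hasWinding_zero_of_ne (lt_of_le_of_lt (norm_nonneg _) haR)
      (f := fun _ => 1) continuous_const (by simp)
  | succ k ih => simpa [pow_succ] using ih.mul (hasWinding_linear ha haR)

/-- Divides an entire function by the full power of `s - a` that it contains. -/
theorem exists_factor {f : ℂ → ℂ} (hf : Differentiable ℂ f) {b : ℂ} (hb : f b ≠ 0) (a : ℂ) :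
    ∃ (k : ℕ) (h : ℂ → ℂ), Differentiable ℂ h ∧ h a ≠ 0 ∧ ∀ s, f s = (s - a) ^ k * h s := by
  have hfa : ∀ x, AnalyticAt ℂ f x := fun x => hf.analyticAt x
  have htop : analyticOrderAt f a ≠ ⊤ := by
    intro h
    rw [analyticOrderAt_eq_top] at h
    exact hb (AnalyticOnNhd.eqOn_zero_of_preconnected_of_eventuallyEq_zero (f := f)
      (U := Set.univ) (fun x _ => hfa x) isPreconnected_univ (Set.mem_univ a) h (Set.mem_univ b))
  obtain ⟨d, hd⟩ := ENat.ne_top_iff_exists.1 htop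
  obtain ⟨g, hg, hg0, hev⟩ := ((hfa a).analyticOrderAt_eq_natCast (n := d)).1 hd.symm
  classical
  set h : ℂ → ℂ := fun s => if s = a then g a else f s / (s - a) ^ d with hh
  have hne : ∀ s, s ≠ a → h s = f s / (s - a) ^ d := fun s hs => if_neg hs
  have hha : h a = g a := if_pos rfl
  have hhg : h =ᶠ[nhds a] g := by
    filter_upwards [hev] with s hs
    by_cases hsa : s = a
    · rw [hsa, hha]
    · rw [hne s hsa, hs, smul_eq_mul, mul_div_cancel_left₀ _ (pow_ne_zero _ (sub_ne_zero.2 hsa))]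
  refine ⟨d, h, fun s => ?_, by rwa [hha], fun s => ?_⟩
  · by_cases hsa : s = a
    · rw [hsa]; exact hg.differentiableAt.congr_of_eventuallyEq hhg
    · have h1 : h =ᶠ[nhds s] fun s => f s / (s - a) ^ d := by
        filter_upwards [isOpen_ne.mem_nhds hsa] with x hx using hne x hx
      refine DifferentiableAt.congr_of_eventuallyEq ?_ h1
      exact (hf s).div (by fun_prop) (pow_ne_zero _ (sub_ne_zero.2 hsa))
  · by_cases hsa : s = a
    · rw [hsa, hha]; simpa using hev.self_of_nhds
    · rw [hne s hsa, mul_div_cancel₀ _ (pow_ne_zero _ (sub_ne_zero.2 hsa))]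

/-- A form of the argument principle for the half disc, with `Z` the set of zeros in the closed right
half plane: each zero contributes its multiplicity to the winding, which is therefore positive
exactly when there is a zero. -/
theorem exists_hasWinding {R : ℝ} (hR : 0 < R) (Z : Finset ℂ) :
    ∀ {f : ℂ → ℂ}, Differentiable ℂ f → (∀ a ∈ Z, 0 < a.re ∧ ‖a‖ < R) →
      (∀ s : ℂ, 0 ≤ s.re → (f s = 0 ↔ s ∈ Z)) →
      ∃ n : ℕ, HasWinding R f n ∧ (n = 0 ↔ Z = ∅) := by
  classical
  induction Z using Finset.induction_on with
  | empty =>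
    intro f hf _ hZ
    exact ⟨0, hasWinding_zero_of_ne hR hf.continuous fun s hs h => by simpa using (hZ s hs).1 h,
      by simp⟩
  | insert a Z haZ ih =>
    intro f hf hpos hZ
    have hb : f 0 ≠ 0 := by
      intro h
      have := (hpos 0 ((hZ 0 (by simp)).1 h)).1
      simp at this
    obtain ⟨k, h, hd, hha, hfac⟩ := exists_factor hf hb a
    obtain ⟨ha1, ha2⟩ := hpos a (Finset.mem_insert_self _ _)
    have hk : k ≠ 0 := by
      rintro rfl
      have := (hZ a ha1.le).2 (Finset.mem_insert_self _ _)
      rw [hfac] at this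
      simp at this
      exact hha this
    obtain ⟨n, hn, -⟩ := ih hd (fun b hb => hpos b (Finset.mem_insert_of_mem hb)) (by
      intro s hs
      by_cases hsa : s = a
      · subst hsa; simp [hha, haZ]
      · have h1 := hZ s hs
        rw [hfac, mul_eq_zero, or_iff_right (pow_ne_zero _ (sub_ne_zero.2 hsa))] at h1
        rw [h1, Finset.mem_insert, or_iff_right hsa])
    refine ⟨k + n, ?_, ?_⟩
    · have := (hasWinding_linear_pow ha1 ha2 k).mul hn
      have he : f = fun s => (s - a) ^ k * h s := funext hfac
      rw [he]; exact this
    · constructor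
      · intro h; omega
      · intro h; exact absurd h (Finset.insert_ne_empty _ _)

/-! ### Counting the zeros -/

theorem charFn_zeros_finite {τ ξ : ℝ} (hτ : 0 < τ) (hξ : |ξ| < 1) {N : ℝ → ℝ}
    (hN : ContinuousOn N (Set.Icc 0 τ)) :
    {s : ℂ | 0 ≤ s.re ∧ charFn τ ξ N s = 0}.Finite := by
  obtain ⟨R, hR, h⟩ := charFn_re_ge hτ hξ hN
  by_contra hinf
  have hsub : {s : ℂ | 0 ≤ s.re ∧ charFn τ ξ N s = 0} ⊆ Metric.closedBall (0:ℂ) R := by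
    rintro s ⟨hs, hs0⟩
    rw [mem_closedBall_zero_iff]
    by_contra hc
    have := h s hs (not_le.1 hc).le
    rw [hs0, Complex.zero_re] at this
    linarith
  obtain ⟨x, -, hx⟩ := Set.Infinite.exists_accPt_of_subset_isCompact hinf
    (isCompact_closedBall _ _) hsub
  rw [accPt_iff_frequently_nhdsNE] at hx
  have hz : charFn τ ξ N = fun _ => 0 := AnalyticOnNhd.eq_of_frequently_eq
    (fun z _ => (charFn_differentiable hτ hN).analyticAt z)
    (fun z _ => analyticAt_const) (hx.mono fun y hy => hy.2)
  have := h (R : ℂ) (by simpa using hR.le) (by simp [abs_of_pos hR])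
  rw [hz, Complex.zero_re] at this
  linarith

/-- The alternating sum of signs at the zeros of `Re Δ` on the positive imaginary axis is a natural
number `n`, which vanishes exactly when `Δ` has no zero in the closed right half plane. Here `n` is
the winding of `Δ` around a large half disc. The argument is followed along the upper and along the
lower half of the imaginary axis by `crossing`; the two values obtained at `0` differ by `2πn`. -/
theorem exists_zero_count {τ ξ : ℝ} (hτ : 0 < τ) (hξ : |ξ| < 1) {N : ℝ → ℝ}
    (hN : ContinuousOn N (Set.Icc 0 τ)) {M S : ℝ → ℝ}
    (hM : ∀ ω : ℝ, M ω = (charFn τ ξ N (I * ω)).re)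
    (hS : ∀ ω : ℝ, S ω = (charFn τ ξ N (I * ω)).im)
    (hnoim : ∀ ω : ℝ, charFn τ ξ N (I * ω) ≠ 0)
    {m : ℕ} {ρ : Fin m → ℝ} (hρdec : Antitone ρ)
    (hρzero : ∀ j : Fin m, 0 < ρ j ∧ M (ρ j) = 0)
    (hρmult : ∀ r : ℝ, 0 < r → M r = 0 →
      ({j : Fin m | ρ j = r} : Set (Fin m)).ncard = zeroOrder M r) :
    ∃ n : ℕ, ((n : ℝ) = ∑ j : Fin m, (-1 : ℝ) ^ (j : ℕ) * Real.sign (S (ρ j))) ∧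
      (n = 0 ↔ ∀ s : ℂ, 0 ≤ s.re → charFn τ ξ N s ≠ 0) := by
  have hpi := Real.pi_pos
  obtain ⟨R, hR, hRe⟩ := charFn_re_ge hτ hξ hN
  have hRe' : ∀ s : ℂ, 0 ≤ s.re → R ≤ ‖s‖ → 0 < (charFn τ ξ N s).re := fun s h1 h2 =>
    lt_of_lt_of_le (by linarith) (hRe s h1 h2)
  have hfin := charFn_zeros_finite hτ hξ hN
  have hd := charFn_differentiable (ξ := ξ) hτ hN
  have hZ : ∀ s : ℂ, 0 ≤ s.re → (charFn τ ξ N s = 0 ↔ s ∈ hfin.toFinset) := by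
    intro s hs; simp [hs]
  obtain ⟨n, ⟨θ, φ, hθ, hφ, hθa, hφa, hend1, hend2⟩, hn⟩ :=
    exists_hasWinding hR hfin.toFinset hd (by
      intro a ha
      rw [Set.Finite.mem_toFinset] at ha
      obtain ⟨h1, h2⟩ := ha
      constructor
      · refine lt_of_le_of_ne h1 fun h => hnoim a.im ?_
        have : I * a.im = a := by
          apply Complex.ext <;> simp [← h]
        rw [this, h2]
      · by_contra hc
        have := hRe' a h1 (not_lt.1 hc)
        rw [h2] at this; simp at this) hZ
  -- along the semicircle the real part is positive, so `φ` is the principal argument up to a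
  -- constant multiple of `2π`
  set c : ℝ → ℂ := fun t => charFn τ ξ N (R * Complex.exp (t * I)) with hc
  have hcc : Continuous c := hd.continuous.comp (by fun_prop)
  have hcpos : ∀ t ∈ Set.Icc (-(π / 2)) (π / 2), 0 < (c t).re := by
    intro t ht
    refine hRe' _ ?_ ?_
    · rw [Complex.re_ofReal_mul, Complex.exp_ofReal_mul_I_re]
      exact mul_nonneg hR.le (Real.cos_nonneg_of_mem_Icc ht)
    · rw [norm_mul, Complex.norm_exp_ofReal_mul_I, mul_one, Complex.norm_of_nonneg hR.le]
  have hcarg : ∀ t ∈ Set.Icc (-(π / 2)) (π / 2), |(c t).arg| < π / 2 := fun t ht =>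
    Complex.abs_arg_lt_pi_div_two_iff.2 (Or.inl (hcpos t ht))
  have hcband : ∃ k : ℤ, ∀ t ∈ Set.Icc (-(π / 2)) (π / 2), |φ t - k * (2 * π)| < π / 2 := by
    have hcont : ContinuousOn (fun t => (φ t - (c t).arg) / (2 * π))
        (Set.Icc (-(π / 2)) (π / 2)) := by
      refine ContinuousOn.div_const (hφ.continuousOn.sub fun t ht => ?_) _
      exact ((Complex.continuousAt_arg (Or.inl (hcpos t ht))).comp
        hcc.continuousAt).continuousWithinAt
    have hint : ∀ t ∈ Set.Icc (-(π / 2)) (π / 2), ∃ k : ℤ, φ t = (c t).arg + k * (2 * π) := by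
      intro t ht
      refine (hφa t ht).sub_eq ?_ (isAngle_arg _)
      intro h
      have := hcpos t ht
      simp only [hc] at this
      rw [h] at this; simp at this
    have hdisc : IsDiscrete (Set.range ((↑) : ℤ → ℝ)) :=
      Int.isClosedEmbedding_coe_real.isInducing.isDiscrete_range
    have hconst : ∀ t ∈ Set.Icc (-(π / 2)) (π / 2),
        (φ t - (c t).arg) / (2 * π) = (φ (π / 2) - (c (π / 2)).arg) / (2 * π) := by
      intro t ht
      refine isPreconnected_Icc.constant_of_mapsTo (T := Set.range ((↑) : ℤ → ℝ))
        hdisc hcont ?_ ht ⟨by linarith, le_rfl⟩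
      intro t ht
      obtain ⟨k, hk⟩ := hint t ht
      exact ⟨k, by simp only [hk]; field_simp; ring⟩
    obtain ⟨k, hk⟩ := hint (π / 2) ⟨by linarith, le_rfl⟩
    refine ⟨k, fun t ht => ?_⟩
    have h1 := hconst t ht
    rw [hk, div_left_inj' (by positivity)] at h1
    have : φ t - k * (2 * π) = (c t).arg := by linarith
    rw [this]; exact hcarg t ht
  obtain ⟨k, hk⟩ := hcband
  have hk1 := hk (π / 2) ⟨by linarith, le_rfl⟩
  have hk2 := hk (-(π / 2)) ⟨le_rfl, by linarith⟩
  rw [hend1] at hk1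
  rw [hend2] at hk2
  -- data on the imaginary axis
  have hMan : ∀ x, AnalyticAt ℝ M x := by
    intro x
    have h1 : AnalyticAt ℂ (fun s : ℂ => charFn τ ξ N (I * s)) x :=
      (hd.comp (differentiable_const I |>.mul differentiable_id)).analyticAt _
    have h2 := h1.re_ofReal
    have h3 : M = fun x : ℝ => (charFn τ ξ N (I * x)).re := funext hM
    rw [h3]; exact h2
  have hr : ∀ ω : ℝ, 0 < ‖charFn τ ξ N (I * ω)‖ := fun ω => norm_pos_iff.2 (hnoim ω)
  have hMpos : ∀ x, R ≤ x → 0 < M x := by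
    intro x hx
    rw [hM]
    refine hRe' _ (by simp) ?_
    rw [norm_mul, Complex.norm_I, one_mul, Complex.norm_of_nonneg (hR.le.trans hx)]; exact hx
  have hconj : ∀ ω : ℝ, charFn τ ξ N (I * (-ω : ℝ)) = starRingEnd ℂ (charFn τ ξ N (I * ω)) := by
    intro ω
    rw [← charFn_conj]; congr 1; simp
  have hS0 : S 0 = 0 := by
    have := congrArg Complex.im (hconj 0)
    rw [neg_zero, ← hS, Complex.conj_im, ← hS] at this
    linarith
  have hcs : ∀ ω : ℝ, ∀ (j : ℤ),
      M ω = ‖charFn τ ξ N (I * ω)‖ * Real.cos (θ ω - j * (2 * π)) ∧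
      S ω = ‖charFn τ ξ N (I * ω)‖ * Real.sin (θ ω - j * (2 * π)) := by
    intro ω j
    rw [Real.cos_sub_int_mul_two_pi, Real.sin_sub_int_mul_two_pi]
    have h1 := hθa ω
    unfold IsAngle at h1
    constructor
    · rw [hM]
      have := congrArg Complex.re h1
      rwa [Complex.re_ofReal_mul, Complex.exp_ofReal_mul_I_re] at this
    · rw [hS]
      have := congrArg Complex.im h1
      rwa [Complex.im_ofReal_mul, Complex.exp_ofReal_mul_I_im] at this
  have hcs' : ∀ ω : ℝ, ∀ (j : ℤ),
      M ω = ‖charFn τ ξ N (I * ω)‖ * Real.cos (-(θ (-ω) - j * (2 * π))) ∧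
      S ω = ‖charFn τ ξ N (I * ω)‖ * Real.sin (-(θ (-ω) - j * (2 * π))) := by
    intro ω j
    obtain ⟨h1, h2⟩ := hcs (-ω) j
    have hn : ‖charFn τ ξ N (I * (-ω : ℝ))‖ = ‖charFn τ ξ N (I * ω)‖ := by
      rw [hconj, Complex.norm_conj]
    rw [hn] at h1 h2
    rw [Real.cos_neg, Real.sin_neg, mul_neg, ← h1, ← h2, hM, hM, hS, hS, hconj]
    simp
  have hup := crossing hMan (Θ := fun ω => θ ω - k * (2 * π)) (by fun_prop) hr
    (fun ω => (hcs ω k).1) (fun ω => (hcs ω k).2) hMpos hk1 hS0 hρdec hρzero hρmult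
  have hdown := crossing hMan (Θ := fun ω => -(θ (-ω) - (k + n : ℤ) * (2 * π))) (by fun_prop) hr
    (fun ω => (hcs' ω (k + n)).1) (fun ω => (hcs' ω (k + n)).2) hMpos (by
      rw [abs_neg]; push_cast
      have : θ (-R) - (k + n) * (2 * π) = θ (-R) - n * (2 * π) - k * (2 * π) := by ring
      rw [this]; exact hk2) hS0 hρdec hρzero hρmult
  simp only [neg_zero] at hdown
  refine ⟨n, ?_, ?_⟩
  · push_cast at hdown
    have : π * (n : ℝ) = π * ∑ j : Fin m, (-1 : ℝ) ^ (j : ℕ) * Real.sign (S (ρ j)) := by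
      linarith
    exact mul_left_cancel₀ hpi.ne' this
  · rw [hn, Finset.eq_empty_iff_forall_notMem]
    constructor
    · intro h s hs h0
      exact h s ((hZ s hs).1 h0)
    · intro h s hs
      rw [Set.Finite.mem_toFinset] at hs
      exact h s hs.1 hs.2

/-- `Δ` is real on the real axis, positive far to the right and without zeros on `[0, ∞)`, so
`Δ(0) = 1 - ξ - ∫ N` is positive. -/
theorem integral_lt_of_no_zeros {τ ξ : ℝ} (hτ : 0 < τ) (hξ : |ξ| < 1) {N : ℝ → ℝ}
    (hN : ContinuousOn N (Set.Icc 0 τ)) (h0 : ∀ s : ℂ, 0 ≤ s.re → charFn τ ξ N s ≠ 0) :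
    (∫ ν in (0:ℝ)..τ, N ν) < 1 - ξ := by
  obtain ⟨R, hR, hRe⟩ := charFn_re_ge hτ hξ hN
  have hval : (charFn τ ξ N (0 : ℝ)).re = 1 - ξ - ∫ ν in (0:ℝ)..τ, N ν := by
    have : charFn τ ξ N (0 : ℝ) = ((1 - ξ - ∫ ν in (0:ℝ)..τ, N ν : ℝ) : ℂ) := by
      unfold charFn
      push_cast
      rw [← intervalIntegral.integral_ofReal]
      simp
    rw [this, Complex.ofReal_re]
  by_contra hcon
  have hle : (charFn τ ξ N (0 : ℝ)).re ≤ 0 := by rw [hval]; linarith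
  have hge : 0 ≤ (charFn τ ξ N (R : ℝ)).re := by
    have := hRe (R : ℝ) (by simpa using hR.le) (by simp [abs_of_pos hR])
    linarith
  have hcont : Continuous fun x : ℝ => (charFn τ ξ N x).re :=
    Complex.continuous_re.comp ((charFn_differentiable hτ hN).continuous.comp
      Complex.continuous_ofReal)
  obtain ⟨x, hx, hx0⟩ := intermediate_value_Icc hR.le hcont.continuousOn ⟨hle, hge⟩
  refine h0 x (by simpa using hx.1) (Complex.ext hx0 ?_)
  have := congrArg Complex.im (charFn_conj τ ξ N x)
  rw [Complex.conj_ofReal, Complex.conj_im] at this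
  simp only [Complex.zero_im]
  linarith

theorem stmt_10 (τ ξ : ℝ) (hτ : 0 < τ) (hξ : |ξ| < 1) (N : ℝ → ℝ)
    (hN : ContinuousOn N (Set.Icc 0 τ))
    (Δ : ℂ → ℂ)
    (hΔ : ∀ s : ℂ, Δ s = 1 - (ξ : ℂ) * Complex.exp (-s * τ)
      - ∫ ν in (0:ℝ)..τ, (N ν : ℂ) * Complex.exp (-s * ν))
    (M S : ℝ → ℝ)
    (hM : ∀ ω : ℝ, M ω = (Δ (Complex.I * ω)).re)
    (hS : ∀ ω : ℝ, S ω = (Δ (Complex.I * ω)).im)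
    -- `Δ` has no roots on the imaginary axis
    (hnoim : ∀ ω : ℝ, Δ (Complex.I * ω) ≠ 0)
    -- `ρ₁ ≥ ρ₂ ≥ … ≥ ρ_m > 0` are the positive zeros of `M`, repeated according to
    -- their multiplicities and ordered decreasingly
    (m : ℕ) (ρ : Fin m → ℝ)
    (hρdec : Antitone ρ)
    (hρzero : ∀ j : Fin m, 0 < ρ j ∧ M (ρ j) = 0)
    (hρmult : ∀ r : ℝ, 0 < r → M r = 0 →
      ({j : Fin m | ρ j = r} : Set (Fin m)).ncard = zeroOrder M r)
    (Γ : ℝ) (hΓ : Γ = ∑ j : Fin m, (-1 : ℝ) ^ (j : ℕ) * Real.sign (S (ρ j))) :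
    ExpStableIDE τ ξ N ↔ ((∫ ν in (0:ℝ)..τ, N ν) < 1 - ξ ∧ Γ = 0) := by
  obtain rfl : Δ = charFn τ ξ N := funext hΔ
  obtain ⟨n, hnΓ, hn⟩ := exists_zero_count hτ hξ hN hM hS hnoim hρdec hρzero hρmult
  have hΓn : Γ = n := hΓ.trans hnΓ.symm
  have hnz : Γ = 0 ↔ ∀ s : ℂ, 0 ≤ s.re → charFn τ ξ N s ≠ 0 := by
    rw [hΓn, Nat.cast_eq_zero, hn]
  constructor
  · intro h
    have h0 : ∀ s : ℂ, 0 ≤ s.re → charFn τ ξ N s ≠ 0 := fun s hs hs0 =>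
      not_stable_of_zero hτ hN hs0 hs h
    exact ⟨integral_lt_of_no_zeros hτ hξ hN h0, hnz.2 h0⟩
  · rintro ⟨-, h⟩
    exact stable_of_no_zeros hτ hξ hN (hnz.1 h)
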